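/- arXiv:2604.13913 — 2 statements merged into one kernel-verified Lean document; each statement's English description precedes it below -/
import Mathlib

section
/- Let b > 1 and β ∈ (0, 1/2). For almost every pair (Θ, Λ) ∈ [0,1]^ℕ × [0,1]^ℕ (with respect to the infinite product of uniform measures on [0,1]), the Hausdorff dimension of the graph G(f_{Θ,Λ}) = {(t, f_{Θ,Λ}(t)) : t ∈ [0,1]} ⊂ ℝ³ is at least 3 − 2β. -/
open MeasureTheory

/-- First coordinate of the random vector-valued Weierstrass function
`t ↦ ∑ b^{-βn} cos(2π(bⁿ t + θₙ))`. -/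
noncomputable def W1 (b β : ℝ) (Θ : ℕ → ℝ) (t : ℝ) : ℝ :=
  ∑' n : ℕ, b ^ (-β * (n : ℝ)) * Real.cos (2 * Real.pi * (b ^ n * t + Θ n))

/-- Second coordinate of the random vector-valued Weierstrass function
`t ↦ ∑ b^{-βn} sin(2π(bⁿ t + λₙ))`. -/
noncomputable def W2 (b β : ℝ) (Λ : ℕ → ℝ) (t : ℝ) : ℝ :=
  ∑' n : ℕ, b ^ (-β * (n : ℝ)) * Real.sin (2 * Real.pi * (b ^ n * t + Λ n))

/-- Euclidean distance `|f_{Θ,Λ}(x) - f_{Θ,Λ}(y)|` in ℝ². -/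
noncomputable def Wdist (b β : ℝ) (Θ Λ : ℕ → ℝ) (x y : ℝ) : ℝ :=
  Real.sqrt ((W1 b β Θ x - W1 b β Θ y) ^ 2 + (W2 b β Λ x - W2 b β Λ y) ^ 2)

/-- The graph `G(f_{Θ,Λ}) = {(t, f_{Θ,Λ}(t)) : t ∈ [0,1]}` inside ℝ³ = ℝ × ℝ². -/
def Wgraph (b β : ℝ) (Θ Λ : ℕ → ℝ) : Set (ℝ × ℝ × ℝ) :=
  {p | ∃ t ∈ Set.Icc (0 : ℝ) 1, p = (t, W1 b β Θ t, W2 b β Λ t)}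

/-- `μ` is the infinite product over `ℕ` of the uniform probability measures on `[0,1]`:
the measure of every measurable cylinder is the corresponding finite product of
uniform measures. -/
def IsUniformProductMeasure (μ : Measure (ℕ → ℝ)) : Prop :=
  ∀ (t : Finset ℕ) (s : ℕ → Set ℝ), (∀ i, MeasurableSet (s i)) →
    μ {f : ℕ → ℝ | ∀ i ∈ t, f i ∈ s i} =
      ∏ i ∈ t, (volume.restrict (Set.Icc (0 : ℝ) 1)) (s i)

/-!
The image of a random parametrization `G` has almost surely dimension at least `σ` as soon as the
expected Riesz energy `∬ E |G x - G y|^{-σ}` is finite. The difference of the graph points over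
`x` and `y` has the coordinate `x - y` and two independent coordinates, the increments of the
Weierstrass series. By the sum-to-product formulas each increment is a series of sines with
independent uniform phases, whose amplitudes at two consecutive frequencies `bⁿ` and `bⁿ⁺¹`
comparable to `1 / |x - y|` are of order at least `|x - y|^β`.

One sine with uniform phase is not enough to bound `E |z + A sin|^{-s}` uniformly in `z` for all
`s < 1`: its density blows up like an inverse square root at `±A`, which restricts `s` to
`s < 1/2`. Two independent sines suffice: for `s < p < 1` the weight `|cos|^p` tames the singularity
of one sine and still has an integrable inverse, so that either sine may be averaged first wherever
its weight is the larger one. Hence both increments have negative moments of every order `s < 1`,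
bounded by a constant times `|x - y|^{-βs}`. For `2s ≤ σ` the expected kernel is then at most a
constant times `|x - y|^{-(σ - 2s + 2βs)}`, which is integrable for a suitable `s` when
`σ < min (1 / β) (3 - 2β)`.
-/

open Set Function Metric Real
open scoped ENNReal NNReal

/-! ### Riesz energies and Hausdorff dimension -/

section EnergyMethod

variable {X T Ω : Type*} [EMetricSpace X] [MeasurableSpace X] [BorelSpace X]
  [MeasurableSpace T] [MeasurableSpace Ω] {ν : Measure X} {σ : ℝ≥0}

theorem le_dimH_of_forall_measure_le {C : ℝ≥0∞} (hC : C ≠ ∞)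
    (hν : ∀ s, ediam s ≤ 1 → ν s ≤ C * ediam s ^ (σ : ℝ)) {S : Set X} (hS : ν S ≠ 0) :
    σ ≤ dimH S := by
  have hle : C⁻¹ • ν ≤ μH[σ] := Measure.le_hausdorffMeasure _ _ 1 one_pos fun s hs => by
    rw [Measure.smul_apply, smul_eq_mul, mul_comm, ← div_eq_mul_inv]
    exact ENNReal.div_le_of_le_mul' (hν s hs)
  refine le_dimH_of_hausdorffMeasure_ne_zero fun hzero => ?_
  have hCS : C⁻¹ * ν S = 0 := le_antisymm ((hle S).trans_eq hzero) zero_le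
  exact (mul_ne_zero (ENNReal.inv_ne_zero.2 hC) hS) hCS

/-- The Riesz `σ`-potential `x ↦ ∫ d(x, y)^{-σ} dν(y)` of a measure. Since `0 ^ (-σ) = ∞` in
`ℝ≥0∞` for `σ > 0`, atoms of `ν` have infinite potential. -/
noncomputable def rieszPotential (ν : Measure X) (σ : ℝ) (x : X) : ℝ≥0∞ :=
  ∫⁻ y, edist x y ^ (-σ) ∂ν

/-- The Riesz `σ`-energy `∬ d(x, y)^{-σ} dν(x) dν(y)` of a measure, whose finiteness forces sets
charged by the measure to have Hausdorff dimension at least `σ`. -/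
noncomputable def rieszEnergy (ν : Measure X) (σ : ℝ) : ℝ≥0∞ :=
  ∫⁻ x, rieszPotential ν σ x ∂ν

theorem measure_closedEBall_le_of_rieszPotential_le {M r : ℝ≥0∞} {x : X} (hM : M ≠ ∞)
    (hr : r ≠ ∞) (hx : rieszPotential ν σ x ≤ M) : ν (closedEBall x r) ≤ M * r ^ (σ : ℝ) := by
  have hmarkov : r ^ (-(σ : ℝ)) * ν (closedEBall x r) ≤ M := calc
    _ ≤ r ^ (-(σ : ℝ)) * ν {y | r ^ (-(σ : ℝ)) ≤ edist x y ^ (-(σ : ℝ))} := by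
      refine mul_le_mul_right (measure_mono fun y hy => ?_) _
      simp only [Set.mem_ofPred_eq, ENNReal.rpow_neg]
      gcongr
      exact mem_closedEBall'.1 hy
    _ ≤ rieszPotential ν σ x :=
      mul_meas_ge_le_lintegral ((measurable_edist_right).pow_const _) _
    _ ≤ M := hx
  rw [ENNReal.rpow_neg, mul_comm, ← div_eq_mul_inv] at hmarkov
  exact (ENNReal.div_le_iff_le_mul (.inr hM)
    (.inl (ENNReal.rpow_ne_top_of_nonneg σ.2 hr))).1 hmarkov

variable [SecondCountableTopology X]

theorem measurable_rieszPotential [SFinite ν] (σ : ℝ) : Measurable (rieszPotential ν σ) :=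
  (measurable_edist.pow_const _).lintegral_prod_right'

theorem le_dimH_of_rieszEnergy_ne_top [SFinite ν] (hE : rieszEnergy ν σ ≠ ∞) {S : Set X}
    (hS : ν S ≠ 0) : σ ≤ dimH S := by
  have hmeas := measurable_rieszPotential (ν := ν) σ
  let A : ℕ → Set X := fun M => {x | rieszPotential ν σ x ≤ M}
  have hcover : ν (S \ ⋃ M, A M) = 0 := by
    refine measure_mono_null (fun x hx => ?_) (ae_lt_top hmeas hE)
    exact fun hfin => hx.2 (mem_iUnion.2 ((ENNReal.exists_nat_gt hfin.ne).imp fun _ => le_of_lt))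
  obtain ⟨M, hM⟩ : ∃ M, 0 < ν (S ∩ A M) := by
    refine exists_measure_pos_of_not_measure_iUnion_null fun hnull => hS ?_
    rw [← inter_iUnion] at hnull
    exact measure_mono_null (inter_union_sdiff S _).ge (measure_union_null hnull hcover)
  have hA : MeasurableSet (A M) := hmeas measurableSet_Iic
  refine le_dimH_of_forall_measure_le (ν := ν.restrict (A M)) (ENNReal.natCast_ne_top M)
    (fun s hs => ?_) (by rw [Measure.restrict_apply' hA]; exact hM.ne')
  rw [Measure.restrict_apply' hA]
  obtain hempty | ⟨x, hxs, hxA⟩ := (s ∩ A M).eq_empty_or_nonempty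
  · simp [hempty]
  · calc ν (s ∩ A M) ≤ ν (closedEBall x (ediam s)) :=
          measure_mono fun y hy => edist_le_ediam_of_mem hy.1 hxs
      _ ≤ M * ediam s ^ (σ : ℝ) := measure_closedEBall_le_of_rieszPotential_le
          (ENNReal.natCast_ne_top M) (ne_top_of_le_ne_top ENNReal.one_ne_top hs) hxA

theorem rieszEnergy_map {ρ : Measure T} [SFinite ρ] {g : T → X} (hg : Measurable g) (σ : ℝ) :
    rieszEnergy (ρ.map g) σ = ∫⁻ x, ∫⁻ y, edist (g x) (g y) ^ (-σ) ∂ρ ∂ρ := by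
  rw [rieszEnergy, lintegral_map (measurable_rieszPotential σ) hg]
  exact lintegral_congr fun x => lintegral_map (measurable_edist_right.pow_const _) hg

theorem ae_le_dimH_image_of_lintegral_edist_rpow_neg_ne_top {P : Measure Ω} [SFinite P]
    {ρ : Measure T} [SFinite ρ] {G : Ω → T → X} (hG : Measurable (uncurry G))
    (hE : ∫⁻ x, ∫⁻ y, ∫⁻ ω, edist (G ω x) (G ω y) ^ (-(σ : ℝ)) ∂P ∂ρ ∂ρ ≠ ∞) {S : Set T}
    (hS : ρ S ≠ 0) : ∀ᵐ ω ∂P, σ ≤ dimH (G ω '' S) := by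
  have hker : Measurable fun q : Ω × T × T =>
      edist (G q.1 q.2.1) (G q.1 q.2.2) ^ (-(σ : ℝ)) :=
    ((hG.comp (measurable_fst.prodMk measurable_snd.fst)).edist
      (hG.comp (measurable_fst.prodMk measurable_snd.snd))).pow_const _
  have hGω : ∀ ω, Measurable (G ω) := fun ω => hG.comp measurable_prodMk_left
  have henergy : ∀ ω, rieszEnergy (ρ.map (G ω)) σ =
      ∫⁻ z, edist (G ω z.1) (G ω z.2) ^ (-(σ : ℝ)) ∂ρ.prod ρ := fun ω => by
    rw [rieszEnergy_map (hGω ω)]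
    exact (lintegral_prod _ (hker.comp measurable_prodMk_left).aemeasurable).symm
  have hexp : ∫⁻ ω, rieszEnergy (ρ.map (G ω)) σ ∂P ≠ ∞ := by
    simp only [henergy]
    rw [lintegral_lintegral_swap hker.aemeasurable]
    refine ne_of_eq_of_ne (lintegral_prod _ ?_) hE
    exact (hker.comp measurable_swap).lintegral_prod_right'.aemeasurable
  have henergy_meas : Measurable fun ω => rieszEnergy (ρ.map (G ω)) σ := by
    simp only [henergy]
    exact hker.lintegral_prod_right'
  filter_upwards [ae_lt_top henergy_meas hexp] with ω hω
  refine le_dimH_of_rieszEnergy_ne_top hω.ne fun hnull => hS ?_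
  exact measure_mono_null (subset_preimage_image (G ω) S)
    (le_antisymm ((Measure.le_map_apply (hGω ω).aemeasurable _).trans_eq hnull) zero_le)

end EnergyMethod

/-! ### Negative moments of a sum of two sines -/

theorem setLIntegral_enorm_rpow_neg_ne_top {t : ℝ} (ht : t < 1) (a b : ℝ) :
    ∫⁻ w in Icc a b, ‖w‖ₑ ^ (-t) ≠ ∞ := by
  have hint : ∀ c : ℝ, IntervalIntegrable (fun w : ℝ => |w| ^ (-t)) volume 0 c := fun c =>
    intervalIntegrable_of_even (fun w => by rw [abs_neg]) fun c hc =>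
      (intervalIntegral.intervalIntegrable_rpow' (neg_lt_neg ht)).congr fun w hw => by
        rw [uIoc_of_le hc.le] at hw
        simp only [abs_of_pos hw.1]
  have hae : ∀ᵐ w : ℝ, ‖w‖ₑ ^ (-t) = ‖|w| ^ (-t)‖ₑ := by
    filter_upwards [Measure.ae_ne volume 0] with w hw
    rw [Real.enorm_of_nonneg (r := |w| ^ (-t)) (by positivity),
      ← ENNReal.ofReal_rpow_of_pos (abs_pos.2 hw), Real.enorm_eq_ofReal_abs]
  rw [setLIntegral_congr Ioc_ae_eq_Icc.symm, lintegral_congr_ae (ae_restrict_of_ae hae)]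
  exact (((hint a).symm.trans (hint b)).1.hasFiniteIntegral).ne

theorem exists_setLIntegral_enorm_add_rpow_neg_le {t : ℝ} (ht₀ : 0 ≤ t) (ht : t < 1) :
    ∃ C ≠ ∞, ∀ (S : Set ℝ) (z : ℝ), ∫⁻ w in S, ‖w + z‖ₑ ^ (-t) ≤ volume S + C := by
  refine ⟨_, setLIntegral_enorm_rpow_neg_ne_top ht (-1) 1, fun S z => ?_⟩
  let g : ℝ → ℝ≥0∞ := (Icc (-1) 1).indicator fun w => ‖w‖ₑ ^ (-t)
  have hbound : ∀ w : ℝ, ‖w‖ₑ ^ (-t) ≤ 1 + g w := fun w => by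
    by_cases hw : w ∈ Icc (-1) 1
    · simp only [g, indicator_of_mem hw, le_add_self]
    · have hone : 1 ≤ ‖w‖ₑ := by
        rw [Real.enorm_eq_ofReal_abs, ENNReal.one_le_ofReal]
        exact (lt_of_not_ge fun h => hw (abs_le.1 h)).le
      refine le_add_right ?_
      rw [ENNReal.rpow_neg]
      exact ENNReal.inv_le_one.2 (ENNReal.one_rpow t ▸ ENNReal.rpow_le_rpow hone ht₀)
  calc ∫⁻ w in S, ‖w + z‖ₑ ^ (-t)
      ≤ ∫⁻ w in S, (1 + g (w + z)) := lintegral_mono fun w => hbound (w + z)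
    _ = volume S + ∫⁻ w in S, g (w + z) := by
        rw [lintegral_add_left measurable_const, setLIntegral_one]
    _ ≤ volume S + ∫⁻ w, g (w + z) := by
        gcongr
        exact Measure.restrict_le_self
    _ = volume S + ∫⁻ w : ℝ in Icc (-1) 1, ‖w‖ₑ ^ (-t) := by
        rw [lintegral_add_right_eq_self, lintegral_indicator measurableSet_Icc]

/-- The uniform probability measure on `[0, 1]`, as a measure on `ℝ`. -/
noncomputable abbrev uniformIcc : Measure ℝ := volume.restrict (Icc 0 1)

instance : IsProbabilityMeasure uniformIcc := ⟨by simp⟩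

theorem setLIntegral_Ioc_eq_of_periodic {g : ℝ → ℝ≥0∞} (hg : Periodic g 1) (a b : ℝ) :
    ∫⁻ u in Ioc a (a + 1), g u = ∫⁻ u in Ioc b (b + 1), g u := by
  refine (isAddFundamentalDomain_Ioc one_pos a).setLIntegral_eq
    (isAddFundamentalDomain_Ioc one_pos b) g ?_
  rintro ⟨_, n, rfl⟩ u
  simpa [add_comm, AddSubgroup.vadd_def] using hg.int_mul n u

theorem lintegral_uniformIcc_add_of_periodic {g : ℝ → ℝ≥0∞} (hg : Periodic g 1) (φ t : ℝ) :
    ∫⁻ u, g (u + φ) ∂uniformIcc = ∫⁻ u in Ioc t (t + 1), g u := by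
  rw [uniformIcc, setLIntegral_congr Ioc_ae_eq_Icc.symm]
  refine ((measurePreserving_add_right volume φ).setLIntegral_comp_emb
    (measurableEmbedding_addRight φ) g (Ioc 0 1)).trans ?_
  rw [image_add_const_Ioc, zero_add, add_comm 1 φ, setLIntegral_Ioc_eq_of_periodic hg]

theorem setLIntegral_enorm_deriv_mul_comp_le {f f' : ℝ → ℝ} {s t : Set ℝ}
    (hs : MeasurableSet s) (hf : ∀ x ∈ s, HasDerivAt f (f' x) x) (hinj : InjOn f s)
    (hst : MapsTo f s t) (g : ℝ → ℝ≥0∞) :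
    ∫⁻ x in s, ‖f' x‖ₑ * g (f x) ≤ ∫⁻ w in t, g w := by
  simp only [Real.enorm_eq_ofReal_abs]
  rw [← lintegral_image_eq_lintegral_abs_deriv_mul hs (fun x hx => (hf x hx).hasDerivWithinAt) hinj]
  exact lintegral_mono_set hst.image_subset

theorem setLIntegral_enorm_cos_mul_comp_sin_le {s : Set ℝ} (hs : MeasurableSet s)
    (hinj : InjOn (fun u => sin (2 * π * u)) s) (g : ℝ → ℝ≥0∞) :
    ∫⁻ u in s, ‖cos (2 * π * u)‖ₑ * g (sin (2 * π * u)) ≤ ∫⁻ w in Icc (-1) 1, g w := by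
  have hderiv : ∀ u, HasDerivAt (fun u => sin (2 * π * u)) (cos (2 * π * u) * (2 * π)) u :=
    fun u => by simpa using ((hasDerivAt_id u).const_mul (2 * π)).sin
  refine le_trans (lintegral_mono fun u => ?_) (setLIntegral_enorm_deriv_mul_comp_le hs
    (fun u _ => hderiv u) hinj (fun u _ => sin_mem_Icc (2 * π * u)) g)
  have htwo_pi : 1 ≤ ‖2 * π‖ₑ := by
    rw [Real.enorm_of_nonneg two_pi_pos.le, ENNReal.one_le_ofReal]
    linarith [two_le_pi]
  rw [enorm_mul]
  gcongr
  exact le_mul_of_one_le_right' htwo_pi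

theorem lintegral_enorm_cos_mul_comp_sin_le (φ : ℝ) (g : ℝ → ℝ≥0∞) :
    ∫⁻ u, ‖cos (2 * π * (u + φ))‖ₑ * g (sin (2 * π * (u + φ))) ∂uniformIcc ≤
      2 * ∫⁻ w in Icc (-1) 1, g w := by
  have hperiodic : Periodic (fun u => ‖cos (2 * π * u)‖ₑ * g (sin (2 * π * u))) 1 := fun u => by
    simp only [mul_add, mul_one, cos_add_two_pi, sin_add_two_pi]
  have hinj_left : InjOn (fun u => sin (2 * π * u)) (Ioc (-1 / 4) (1 / 4)) := by
    refine (injOn_sin.comp (mul_right_injective₀ two_pi_pos.ne').injOn fun u hu => ?_)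
    constructor <;> nlinarith [hu.1, hu.2, pi_pos]
  have hinj_right : InjOn (fun u => sin (2 * π * u)) (Ioc (1 / 4) (-1 / 4 + 1)) := by
    have hshift : InjOn (fun u => sin (2 * π * u - π)) (Ioc (1 / 4) (-1 / 4 + 1)) := by
      refine injOn_sin.comp ((sub_left_injective (b := π)).comp
        (mul_right_injective₀ two_pi_pos.ne')).injOn fun u hu => ?_
      constructor <;> norm_num <;> nlinarith [hu.1, hu.2, pi_pos]
    intro u hu v hv huv
    exact hshift hu hv (by simpa only [sin_sub_pi, neg_inj] using huv)
  rw [lintegral_uniformIcc_add_of_periodic hperiodic φ (-1 / 4),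
    ← Ioc_union_Ioc_eq_Ioc (b := 1 / 4) (by norm_num) (by norm_num), two_mul (lintegral _ _)]
  exact (lintegral_union_le _ _ _).trans
    (add_le_add (setLIntegral_enorm_cos_mul_comp_sin_le measurableSet_Ioc hinj_left g)
      (setLIntegral_enorm_cos_mul_comp_sin_le measurableSet_Ioc hinj_right g))

theorem rpow_le_one_add_self {y : ℝ≥0∞} {p : ℝ} (hp₀ : 0 ≤ p) (hp₁ : p ≤ 1) :
    y ^ p ≤ 1 + y := by
  rcases le_total y 1 with hy | hy
  · exact (ENNReal.rpow_le_one hy hp₀).trans le_self_add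
  · calc y ^ p ≤ y ^ (1 : ℝ) := ENNReal.rpow_le_rpow_of_exponent_le hy hp₁
      _ = y := ENNReal.rpow_one y
      _ ≤ 1 + y := le_add_self

-- The inserted factor `‖sin x‖ₑ`, bounded below near the zeros of `cos`, is the Jacobian of `cos`
-- that a change of variables needs.
theorem enorm_cos_rpow_neg_le {p : ℝ} (hp : p ≤ 1) (x : ℝ) :
    ‖cos x‖ₑ ^ (-p) ≤ 1 + ‖sin x‖ₑ * ‖cos x‖ₑ ^ (-p) := by
  have hsin : ‖sin x‖ₑ ≤ 1 := by simpa [Real.enorm_eq_ofReal_abs] using abs_sin_le_one x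
  have hcos : ‖cos x‖ₑ ≤ 1 := by simpa [Real.enorm_eq_ofReal_abs] using abs_cos_le_one x
  have hpyth : 1 ≤ ‖cos x‖ₑ + ‖sin x‖ₑ := calc
    1 = ‖cos x * cos x + sin x * sin x‖ₑ := by
      rw [← pow_two, ← pow_two, cos_sq_add_sin_sq, enorm_one]
    _ ≤ ‖cos x‖ₑ * ‖cos x‖ₑ + ‖sin x‖ₑ * ‖sin x‖ₑ := by
      simpa only [enorm_mul] using enorm_add_le (cos x * cos x) (sin x * sin x)
    _ ≤ ‖cos x‖ₑ + ‖sin x‖ₑ :=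
      add_le_add (mul_le_of_le_one_left' hcos) (mul_le_of_le_one_left' hsin)
  have hcos_mul : ‖cos x‖ₑ * ‖cos x‖ₑ ^ (-p) ≤ 1 := by
    rw [ENNReal.rpow_neg, ← div_eq_mul_inv]
    refine ENNReal.div_le_of_le_mul' ?_
    simpa using ENNReal.rpow_le_rpow_of_exponent_ge hcos hp
  calc ‖cos x‖ₑ ^ (-p) ≤ (‖cos x‖ₑ + ‖sin x‖ₑ) * ‖cos x‖ₑ ^ (-p) := le_mul_of_one_le_left' hpyth
    _ ≤ 1 + ‖sin x‖ₑ * ‖cos x‖ₑ ^ (-p) := by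
      rw [add_mul]
      gcongr

theorem exists_lintegral_enorm_cos_rpow_neg_le {p : ℝ} (hp : p < 1) :
    ∃ L ≠ ∞, ∀ φ, ∫⁻ u, ‖cos (2 * π * (u + φ))‖ₑ ^ (-p) ∂uniformIcc ≤ L := by
  refine ⟨1 + 2 * ∫⁻ w : ℝ in Icc (-1) 1, ‖w‖ₑ ^ (-p), ?_, fun φ => ?_⟩
  · exact ENNReal.add_ne_top.2 ⟨ENNReal.one_ne_top,
      ENNReal.mul_ne_top ENNReal.ofNat_ne_top (setLIntegral_enorm_rpow_neg_ne_top hp _ _)⟩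
  have hshift : ∀ u, 2 * π * (u + (φ + 1 / 4)) = 2 * π * (u + φ) + π / 2 := fun u => by ring
  calc ∫⁻ u, ‖cos (2 * π * (u + φ))‖ₑ ^ (-p) ∂uniformIcc
      ≤ ∫⁻ u, (1 + ‖sin (2 * π * (u + φ))‖ₑ * ‖cos (2 * π * (u + φ))‖ₑ ^ (-p)) ∂uniformIcc :=
        lintegral_mono fun u => enorm_cos_rpow_neg_le hp.le _
    _ = 1 + ∫⁻ u, ‖cos (2 * π * (u + (φ + 1 / 4)))‖ₑ *
          ‖sin (2 * π * (u + (φ + 1 / 4)))‖ₑ ^ (-p) ∂uniformIcc := by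
        simp only [hshift, cos_add_pi_div_two, sin_add_pi_div_two, enorm_neg]
        rw [lintegral_add_left measurable_const, lintegral_const, measure_univ, one_mul]
    _ ≤ 1 + 2 * ∫⁻ w : ℝ in Icc (-1) 1, ‖w‖ₑ ^ (-p) := by
        gcongr
        exact lintegral_enorm_cos_mul_comp_sin_le (φ + 1 / 4) fun w => ‖w‖ₑ ^ (-p)

theorem enorm_cos_rpow_mul_enorm_add_mul_sin_rpow_neg_le {s p : ℝ} (hp₀ : 0 < p) (hp : p ≤ 1)
    {A : ℝ} (hA : A ≠ 0) (z x : ℝ) :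
    ‖cos x‖ₑ ^ p * ‖z + A * sin x‖ₑ ^ (-s) ≤
      ‖A‖ₑ ^ (-s) * (1 + ‖cos x‖ₑ * ‖sin x + z / A‖ₑ ^ (-(s / p))) := by
  have hfactor : z + A * sin x = A * (sin x + z / A) := by field_simp; ring
  have hpow : ‖sin x + z / A‖ₑ ^ (-s) = (‖sin x + z / A‖ₑ ^ (-(s / p))) ^ p := by
    rw [← ENNReal.rpow_mul, neg_mul, div_mul_cancel₀ _ hp₀.ne']
  calc ‖cos x‖ₑ ^ p * ‖z + A * sin x‖ₑ ^ (-s)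
      = ‖A‖ₑ ^ (-s) * (‖cos x‖ₑ * ‖sin x + z / A‖ₑ ^ (-(s / p))) ^ p := by
        rw [hfactor, enorm_mul, ENNReal.mul_rpow_of_ne_top enorm_ne_top enorm_ne_top, hpow,
          ENNReal.mul_rpow_of_nonneg _ _ hp₀.le]
        ring
    _ ≤ _ := by
        gcongr
        exact rpow_le_one_add_self hp₀.le hp

theorem exists_lintegral_enorm_cos_rpow_mul_le {s p : ℝ} (hs : 0 ≤ s) (hsp : s < p) (hp : p ≤ 1) :
    ∃ K ≠ ∞, ∀ A : ℝ, A ≠ 0 → ∀ φ z, ∫⁻ u, ‖cos (2 * π * (u + φ))‖ₑ ^ p *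
      ‖z + A * sin (2 * π * (u + φ))‖ₑ ^ (-s) ∂uniformIcc ≤ K * ‖A‖ₑ ^ (-s) := by
  have hp₀ : 0 < p := hs.trans_lt hsp
  obtain ⟨C, hC, hle⟩ := exists_setLIntegral_enorm_add_rpow_neg_le
    (div_nonneg hs hp₀.le) ((div_lt_one hp₀).2 hsp)
  refine ⟨1 + 2 * (volume (Icc (-1 : ℝ) 1) + C), ?_, fun A hA φ z => ?_⟩
  · rw [Real.volume_Icc]
    exact ENNReal.add_ne_top.2 ⟨ENNReal.one_ne_top, ENNReal.mul_ne_top ENNReal.ofNat_ne_top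
      (ENNReal.add_ne_top.2 ⟨ENNReal.ofReal_ne_top, hC⟩)⟩
  calc _ ≤ ∫⁻ u, ‖A‖ₑ ^ (-s) * (1 + ‖cos (2 * π * (u + φ))‖ₑ *
        ‖sin (2 * π * (u + φ)) + z / A‖ₑ ^ (-(s / p))) ∂uniformIcc :=
        lintegral_mono fun u => enorm_cos_rpow_mul_enorm_add_mul_sin_rpow_neg_le hp₀ hp hA z _
    _ = ‖A‖ₑ ^ (-s) * (1 + ∫⁻ u, ‖cos (2 * π * (u + φ))‖ₑ *
        ‖sin (2 * π * (u + φ)) + z / A‖ₑ ^ (-(s / p)) ∂uniformIcc) := by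
        rw [lintegral_const_mul' _ _ (by simp [hA]), lintegral_add_left measurable_const,
          lintegral_const, measure_univ, one_mul]
    _ ≤ ‖A‖ₑ ^ (-s) * (1 + 2 * (volume (Icc (-1 : ℝ) 1) + C)) := by
        gcongr
        refine (lintegral_enorm_cos_mul_comp_sin_le φ fun w => ‖w + z / A‖ₑ ^ (-(s / p))).trans ?_
        gcongr
        exact hle _ _
    _ = _ := mul_comm _ _

theorem one_le_inv_mul_add_inv_mul {a : ℝ≥0∞} (ha₀ : a ≠ 0) (ha : a ≠ ∞) (b : ℝ≥0∞) :
    1 ≤ b⁻¹ * a + a⁻¹ * b := by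
  rcases le_total a b with hab | hba
  · calc 1 = a⁻¹ * a := (ENNReal.inv_mul_cancel ha₀ ha).symm
      _ ≤ b⁻¹ * a + a⁻¹ * b := le_add_left (by gcongr)
  · calc 1 = a⁻¹ * a := (ENNReal.inv_mul_cancel ha₀ ha).symm
      _ ≤ b⁻¹ * a + a⁻¹ * b := le_add_right (by gcongr)

theorem lintegral_lintegral_le_of_weights {X Y : Type*} [MeasurableSpace X] [MeasurableSpace Y]
    {μ : Measure X} {ν : Measure Y} [SFinite μ] [SFinite ν] {α : X → ℝ≥0∞} {β : Y → ℝ≥0∞}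
    {H : X → Y → ℝ≥0∞} (hα : Measurable α) (hβ : Measurable β) (hH : Measurable (uncurry H))
    (hα_ne_zero : ∀ᵐ x ∂μ, α x ≠ 0) (hα_ne_top : ∀ᵐ x ∂μ, α x ≠ ∞) {K L : ℝ≥0∞}
    (hK : ∀ y, ∫⁻ x, α x * H x y ∂μ ≤ K) (hL : ∀ x, ∫⁻ y, β y * H x y ∂ν ≤ L) :
    ∫⁻ x, ∫⁻ y, H x y ∂ν ∂μ ≤ K * ∫⁻ y, (β y)⁻¹ ∂ν + L * ∫⁻ x, (α x)⁻¹ ∂μ := by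
  have hβ_term : ∫⁻ x, ∫⁻ y, (β y)⁻¹ * (α x * H x y) ∂ν ∂μ ≤ K * ∫⁻ y, (β y)⁻¹ ∂ν := calc
    _ = ∫⁻ y, ∫⁻ x, (β y)⁻¹ * (α x * H x y) ∂μ ∂ν := lintegral_lintegral_swap (by fun_prop)
    _ = ∫⁻ y, (β y)⁻¹ * ∫⁻ x, α x * H x y ∂μ ∂ν :=
      lintegral_congr fun y => lintegral_const_mul _ (by fun_prop)
    _ ≤ ∫⁻ y, (β y)⁻¹ * K ∂ν := lintegral_mono fun y => mul_le_mul_right (hK y) _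
    _ = K * ∫⁻ y, (β y)⁻¹ ∂ν := by rw [lintegral_mul_const _ (by fun_prop), mul_comm]
  have hα_term : ∫⁻ x, ∫⁻ y, (α x)⁻¹ * (β y * H x y) ∂ν ∂μ ≤ L * ∫⁻ x, (α x)⁻¹ ∂μ := calc
    _ = ∫⁻ x, (α x)⁻¹ * ∫⁻ y, β y * H x y ∂ν ∂μ :=
      lintegral_congr fun x => lintegral_const_mul _ (by fun_prop)
    _ ≤ ∫⁻ x, (α x)⁻¹ * L ∂μ := lintegral_mono fun x => mul_le_mul_right (hL x) _
    _ = L * ∫⁻ x, (α x)⁻¹ ∂μ := by rw [lintegral_mul_const _ (by fun_prop), mul_comm]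
  calc ∫⁻ x, ∫⁻ y, H x y ∂ν ∂μ
      ≤ ∫⁻ x, ((∫⁻ y, (β y)⁻¹ * (α x * H x y) ∂ν) + ∫⁻ y, (α x)⁻¹ * (β y * H x y) ∂ν) ∂μ := by
        refine lintegral_mono_ae ?_
        filter_upwards [hα_ne_zero, hα_ne_top] with x hx₀ hx
        rw [← lintegral_add_left (by fun_prop)]
        refine lintegral_mono fun y => ?_
        calc H x y ≤ ((β y)⁻¹ * α x + (α x)⁻¹ * β y) * H x y := le_mul_of_one_le_left' <|
            one_le_inv_mul_add_inv_mul hx₀ hx (β y)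
          _ = (β y)⁻¹ * (α x * H x y) + (α x)⁻¹ * (β y * H x y) := by ring
    _ = (∫⁻ x, ∫⁻ y, (β y)⁻¹ * (α x * H x y) ∂ν ∂μ) +
          ∫⁻ x, ∫⁻ y, (α x)⁻¹ * (β y * H x y) ∂ν ∂μ :=
        lintegral_add_left (by fun_prop) _
    _ ≤ K * ∫⁻ y, (β y)⁻¹ ∂ν + L * ∫⁻ x, (α x)⁻¹ ∂μ := add_le_add hβ_term hα_term

theorem exists_lintegral_lintegral_enorm_add_sin_add_sin_rpow_neg_le {s : ℝ} (hs₀ : 0 ≤ s)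
    (hs₁ : s < 1) : ∃ C ≠ ∞, ∀ A B : ℝ, A ≠ 0 → B ≠ 0 → ∀ φ ψ z : ℝ,
      ∫⁻ u, ∫⁻ v, ‖z + A * sin (2 * π * (u + φ)) + B * sin (2 * π * (v + ψ))‖ₑ ^ (-s)
        ∂uniformIcc ∂uniformIcc ≤ C * (‖A‖ₑ ^ (-s) + ‖B‖ₑ ^ (-s)) := by
  obtain ⟨p, hsp, hp⟩ := exists_between hs₁
  obtain ⟨K, hK, hsine⟩ := exists_lintegral_enorm_cos_rpow_mul_le hs₀ hsp hp.le
  obtain ⟨L, hL, hweight⟩ := exists_lintegral_enorm_cos_rpow_neg_le hp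
  refine ⟨K * L, ENNReal.mul_ne_top hK hL, fun A B hA hB φ ψ z => ?_⟩
  have hmeas : ∀ θ : ℝ, Measurable fun u : ℝ => ‖cos (2 * π * (u + θ))‖ₑ ^ p := fun θ => by
    fun_prop
  have hinv : ∀ θ, ∫⁻ u, (‖cos (2 * π * (u + θ))‖ₑ ^ p)⁻¹ ∂uniformIcc ≤ L := fun θ => by
    simpa only [ENNReal.rpow_neg] using hweight θ
  have hne_zero : ∀ᵐ u ∂uniformIcc, ‖cos (2 * π * (u + φ))‖ₑ ^ p ≠ 0 := by
    filter_upwards [ae_lt_top (hmeas φ).inv (ne_top_of_le_ne_top hL (hinv φ))] with u hu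
    exact ENNReal.inv_ne_top.1 hu.ne
  refine (lintegral_lintegral_le_of_weights (hmeas φ) (hmeas ψ) (by fun_prop) hne_zero
    (ae_of_all _ fun u => ENNReal.rpow_ne_top_of_nonneg (hs₀.trans hsp.le) enorm_ne_top)
    (K := K * ‖A‖ₑ ^ (-s)) (L := K * ‖B‖ₑ ^ (-s)) (fun v => ?_) fun u => ?_).trans ?_
  · simpa only [add_right_comm] using hsine A hA φ (z + B * sin (2 * π * (v + ψ)))
  · exact hsine B hB ψ _
  · calc _ ≤ K * ‖A‖ₑ ^ (-s) * L + K * ‖B‖ₑ ^ (-s) * L := by gcongr <;> exact hinv _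
      _ = K * L * (‖A‖ₑ ^ (-s) + ‖B‖ₑ ^ (-s)) := by ring

/-! ### Sine series with independent phases -/

section InfiniteProduct

variable {ι : Type*} [DecidableEq ι] {X : ι → Type*} [∀ i, MeasurableSpace (X i)]
  (P : ∀ i, Measure (X i)) [∀ i, IsProbabilityMeasure (P i)]

theorem map_update_infinitePi_prod (i : ι) :
    ((Measure.infinitePi P).prod (P i)).map (fun q => update q.1 i q.2) =
      Measure.infinitePi P := by
  refine Measure.eq_infinitePi P fun s t ht => ?_
  have hpre : (fun q : (∀ j, X j) × X i => update q.1 i q.2) ⁻¹' (s : Set ι).pi t =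
      (↑(s.erase i) : Set ι).pi t ×ˢ {u | i ∈ s → u ∈ t i} := by
    ext ⟨f, u⟩
    simp only [mem_preimage, Set.mem_pi, SetLike.mem_coe, mem_prod, Finset.mem_erase,
      Set.mem_ofPred_eq]
    refine ⟨fun h => ⟨fun j hj => ?_, fun hi => ?_⟩, fun h j hj => ?_⟩
    · simpa only [update_of_ne hj.1] using h j hj.2
    · simpa only [update_self] using h i hi
    · rcases eq_or_ne j i with rfl | hji
      · simpa only [update_self] using h.2 hj
      · simpa only [update_of_ne hji] using h.1 j ⟨hji, hj⟩
  rw [Measure.map_apply measurable_update' (.pi s.countable_toSet fun j _ => ht j), hpre,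
    Measure.prod_prod, Measure.infinitePi_pi P fun j _ => ht j]
  by_cases hi : i ∈ s
  · simp only [hi, true_imp_iff, Set.ofPred_mem_eq, Finset.prod_erase_mul]
  · simp only [hi, false_imp_iff, Set.ofPred_true, measure_univ, mul_one,
      Finset.erase_eq_of_notMem hi]

variable {P}

theorem lintegral_infinitePi_eq_lintegral_update {F : (∀ j, X j) → ℝ≥0∞} (hF : Measurable F)
    (i : ι) : ∫⁻ f, F f ∂Measure.infinitePi P =
      ∫⁻ f, ∫⁻ u, F (update f i u) ∂P i ∂Measure.infinitePi P := by
  conv_lhs => rw [← map_update_infinitePi_prod P i, lintegral_map hF measurable_update']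
  exact lintegral_prod _ (hF.comp measurable_update').aemeasurable

theorem lintegral_infinitePi_le_of_forall_update_update {F : (∀ j, X j) → ℝ≥0∞}
    (hF : Measurable F) (i j : ι) {C : ℝ≥0∞}
    (hC : ∀ f, ∫⁻ u, ∫⁻ v, F (update (update f i u) j v) ∂P j ∂P i ≤ C) :
    ∫⁻ f, F f ∂Measure.infinitePi P ≤ C := by
  have hmeas : Measurable fun f => ∫⁻ v, F (update f j v) ∂P j :=
    (hF.comp measurable_update').lintegral_prod_right'
  rw [lintegral_infinitePi_eq_lintegral_update hF j,
    lintegral_infinitePi_eq_lintegral_update hmeas i]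
  exact (lintegral_mono hC).trans_eq (by rw [lintegral_const, measure_univ, mul_one])

end InfiniteProduct

/-- The sine series `∑ₙ qₙ sin (2π (Θₙ + φₙ))`, random through the phases `Θ`. -/
noncomputable def sineSeries (q φ Θ : ℕ → ℝ) : ℝ :=
  ∑' n, q n * sin (2 * π * (Θ n + φ n))

/-- The law of a sequence of independent phases, each uniform on `[0, 1]`. -/
noncomputable abbrev uniformPhases : Measure (ℕ → ℝ) := Measure.infinitePi fun _ => uniformIcc

theorem summable_mul_sin {q : ℕ → ℝ} (hq : Summable fun n => |q n|) (x : ℕ → ℝ) :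
    Summable fun n => q n * sin (x n) :=
  .of_norm_bounded hq fun n => by
    rw [norm_eq_abs, abs_mul]
    exact mul_le_of_le_one_right (abs_nonneg _) (abs_sin_le_one _)

theorem continuous_sineSeries {q : ℕ → ℝ} (hq : Summable fun n => |q n|) (φ : ℕ → ℝ) :
    Continuous (sineSeries q φ) :=
  continuous_tsum (fun n => by fun_prop) hq fun n Θ => by
    rw [norm_eq_abs, abs_mul]
    exact mul_le_of_le_one_right (abs_nonneg _) (abs_sin_le_one _)

theorem sineSeries_update {q : ℕ → ℝ} (hq : Summable fun n => |q n|) (φ Θ : ℕ → ℝ) (n : ℕ)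
    (u : ℝ) : sineSeries q φ (update Θ n u) =
      q n * sin (2 * π * (u + φ n)) - q n * sin (2 * π * (Θ n + φ n)) + sineSeries q φ Θ := by
  have hterm : (fun m => q m * sin (2 * π * (update Θ n u m + φ m))) =
      update (fun m => q m * sin (2 * π * (Θ m + φ m))) n (q n * sin (2 * π * (u + φ n))) := by
    ext m
    rcases eq_or_ne m n with rfl | hmn
    · simp only [update_self]
    · simp only [update_of_ne hmn]
  rw [sineSeries, hterm]
  exact ((summable_mul_sin hq fun m => 2 * π * (Θ m + φ m)).hasSum.update n _).tsum_eq

theorem exists_lintegral_enorm_sineSeries_rpow_neg_le {s : ℝ} (hs₀ : 0 ≤ s) (hs₁ : s < 1) :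
    ∃ C ≠ ∞, ∀ q φ : ℕ → ℝ, (Summable fun n => |q n|) → ∀ n m, n ≠ m → q n ≠ 0 → q m ≠ 0 →
      ∫⁻ Θ, ‖sineSeries q φ Θ‖ₑ ^ (-s) ∂uniformPhases ≤
        C * (‖q n‖ₑ ^ (-s) + ‖q m‖ₑ ^ (-s)) := by
  obtain ⟨C, hC, hle⟩ := exists_lintegral_lintegral_enorm_add_sin_add_sin_rpow_neg_le hs₀ hs₁
  refine ⟨C, hC, fun q φ hq n m hnm hn hm => ?_⟩
  have hmeas : Measurable fun Θ => ‖sineSeries q φ Θ‖ₑ ^ (-s) :=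
    (continuous_sineSeries hq φ).measurable.enorm.pow_const _
  refine lintegral_infinitePi_le_of_forall_update_update hmeas n m fun Θ => ?_
  have hsplit : ∀ u v, sineSeries q φ (update (update Θ n u) m v) =
      sineSeries q φ Θ - q n * sin (2 * π * (Θ n + φ n)) - q m * sin (2 * π * (Θ m + φ m)) +
        q n * sin (2 * π * (u + φ n)) + q m * sin (2 * π * (v + φ m)) := fun u v => by
    rw [sineSeries_update hq, sineSeries_update hq, update_of_ne hnm.symm]
    ring
  simp only [hsplit]
  exact hle (q n) (q m) hn hm (φ n) (φ m) _

/-! ### Increments of Weierstrass functions -/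

theorem IsUniformProductMeasure.eq_uniformPhases {μ : Measure (ℕ → ℝ)}
    (hμ : IsUniformProductMeasure μ) : μ = uniformPhases :=
  Measure.eq_infinitePi _ hμ

section Weierstrass

variable {b β : ℝ}

theorem summable_rpow_neg_mul_natCast (hb : 1 < b) (hβ : 0 < β) :
    Summable fun n : ℕ => b ^ (-β * (n : ℝ)) := by
  simp only [rpow_mul_natCast (zero_le_one.trans hb.le)]
  exact summable_geometric_of_lt_one (by positivity)
    (rpow_lt_one_of_one_lt_of_neg hb (neg_lt_zero.2 hβ))

theorem continuous_W1 (hb : 1 < b) (hβ : 0 < β) : Continuous (uncurry (W1 b β)) := by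
  refine continuous_tsum (fun n => by fun_prop) (summable_rpow_neg_mul_natCast hb hβ) fun n q => ?_
  rw [norm_eq_abs, abs_mul, abs_of_nonneg (by positivity)]
  exact mul_le_of_le_one_right (by positivity) (abs_cos_le_one _)

theorem continuous_W2 (hb : 1 < b) (hβ : 0 < β) : Continuous (uncurry (W2 b β)) := by
  refine continuous_tsum (fun n => by fun_prop) (summable_rpow_neg_mul_natCast hb hβ) fun n q => ?_
  rw [norm_eq_abs, abs_mul, abs_of_nonneg (by positivity)]
  exact mul_le_of_le_one_right (by positivity) (abs_sin_le_one _)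

/-- The amplitude `2 b^{-βn} sin(π bⁿ d)` of the `n`-th term of a Weierstrass increment
`W(x) - W(y)` with `x - y = d`. It comes from the sum-to-product formulas for `sin` and `cos`, the
remaining factor being a sine whose phase depends on `n`, `x + y` and the `n`-th random phase. -/
noncomputable def incrementCoeff (b β d : ℝ) (n : ℕ) : ℝ :=
  2 * b ^ (-β * (n : ℝ)) * sin (π * (b ^ n * d))

theorem summable_abs_incrementCoeff (hb : 1 < b) (hβ : 0 < β) (d : ℝ) :
    Summable fun n => |incrementCoeff b β d n| := by
  refine .of_nonneg_of_le (fun _ => abs_nonneg _) (fun n => ?_)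
    ((summable_rpow_neg_mul_natCast hb hβ).mul_left 2)
  rw [incrementCoeff, abs_mul, abs_of_nonneg (by positivity)]
  exact mul_le_of_le_one_right (by positivity) (abs_sin_le_one _)

theorem W1_sub_W1_eq_sineSeries (hb : 1 < b) (hβ : 0 < β) (Θ : ℕ → ℝ) (x y : ℝ) :
    W1 b β Θ x - W1 b β Θ y =
      sineSeries (incrementCoeff b β (x - y)) (fun n => b ^ n * (x + y) / 2 + 1 / 2) Θ := by
  have hsummable : ∀ t, Summable fun n : ℕ =>
      b ^ (-β * (n : ℝ)) * cos (2 * π * (b ^ n * t + Θ n)) := fun t => by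
    simpa only [sin_add_pi_div_two] using summable_mul_sin (summable_rpow_neg_mul_natCast hb hβ).abs
      fun n => 2 * π * (b ^ n * t + Θ n) + π / 2
  rw [W1, W1, ← (hsummable x).tsum_sub (hsummable y)]
  refine tsum_congr fun n => ?_
  have hphase : 2 * π * (Θ n + (b ^ n * (x + y) / 2 + 1 / 2)) =
      (2 * π * (b ^ n * x + Θ n) + 2 * π * (b ^ n * y + Θ n)) / 2 + π := by ring
  rw [← mul_sub, cos_sub_cos, incrementCoeff, hphase, sin_add_pi]
  ring_nf

theorem W2_sub_W2_eq_sineSeries (hb : 1 < b) (hβ : 0 < β) (Λ : ℕ → ℝ) (x y : ℝ) :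
    W2 b β Λ x - W2 b β Λ y =
      sineSeries (incrementCoeff b β (x - y)) (fun n => b ^ n * (x + y) / 2 + 1 / 4) Λ := by
  have hsummable : ∀ t, Summable fun n : ℕ =>
      b ^ (-β * (n : ℝ)) * sin (2 * π * (b ^ n * t + Λ n)) := fun t =>
    summable_mul_sin (summable_rpow_neg_mul_natCast hb hβ).abs fun n => 2 * π * (b ^ n * t + Λ n)
  rw [W2, W2, ← (hsummable x).tsum_sub (hsummable y)]
  refine tsum_congr fun n => ?_
  have hphase : 2 * π * (Λ n + (b ^ n * (x + y) / 2 + 1 / 4)) =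
      (2 * π * (b ^ n * x + Λ n) + 2 * π * (b ^ n * y + Λ n)) / 2 + π / 2 := by ring
  rw [← mul_sub, sin_sub_sin, incrementCoeff, hphase, sin_add_pi_div_two]
  ring_nf

theorem exists_pow_mul_mem_Icc (hb : 1 < b) {d : ℝ} (hd₀ : 0 < d) (hd : d ≤ 1 / (2 * b)) :
    ∃ n : ℕ, b ^ n * d ∈ Icc (1 / (2 * b ^ 2)) (1 / 2) ∧
      b ^ (n + 1) * d ∈ Icc (1 / (2 * b ^ 2)) (1 / 2) := by
  have hb₀ : 0 < b := zero_lt_one.trans hb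
  have hone : 1 ≤ 1 / (2 * b * d) := by
    rw [one_le_div (by positivity)]
    rw [le_div_iff₀ (by positivity)] at hd
    linarith
  obtain ⟨n, hle, hlt⟩ := exists_nat_pow_near hone hb
  rw [le_div_iff₀ (by positivity)] at hle
  rw [div_lt_iff₀ (by positivity), pow_succ] at hlt
  have hmono : b ^ n * d ≤ b ^ (n + 1) * d := by
    gcongr
    exacts [hb.le, n.le_succ]
  have hlow : 1 / (2 * b ^ 2) ≤ b ^ n * d := by
    rw [div_le_iff₀ (by positivity)]
    linarith
  have hupp : b ^ (n + 1) * d ≤ 1 / 2 := by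
    rw [pow_succ]
    linarith
  exact ⟨n, ⟨hlow, hmono.trans hupp⟩, ⟨hlow.trans hmono, hupp⟩⟩

theorem rpow_div_sq_le_abs_incrementCoeff (hb : 1 < b) (hβ : 0 < β) {d : ℝ} {n : ℕ}
    (hn : b ^ n * |d| ∈ Icc (1 / (2 * b ^ 2)) (1 / 2)) :
    |d| ^ β / b ^ 2 ≤ |incrementCoeff b β d n| := by
  have hb₀ : 0 < b := zero_lt_one.trans hb
  have habs : |π * (b ^ n * d)| = π * (b ^ n * |d|) := by
    rw [abs_mul, abs_mul, abs_of_pos pi_pos, abs_of_pos (pow_pos hb₀ n)]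
  have hsin : 1 / b ^ 2 ≤ |sin (π * (b ^ n * d))| := calc
    1 / b ^ 2 = 2 * (1 / (2 * b ^ 2)) := by field_simp
    _ ≤ 2 * (b ^ n * |d|) := by gcongr; exact hn.1
    _ = 2 / π * |π * (b ^ n * d)| := by rw [habs]; field_simp
    _ ≤ |sin (π * (b ^ n * d))| := mul_abs_le_abs_sin (by rw [habs]; nlinarith [hn.2, pi_pos])
  have hscale : |d| ^ β = b ^ (-β * (n : ℝ)) * (b ^ n * |d|) ^ β := by
    rw [mul_rpow (by positivity) (abs_nonneg d), ← rpow_natCast_mul hb₀.le, ← mul_assoc,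
      ← rpow_add hb₀, neg_mul, mul_comm β, neg_add_cancel, rpow_zero, one_mul]
  calc |d| ^ β / b ^ 2 = b ^ (-β * (n : ℝ)) * (b ^ n * |d|) ^ β * (1 / b ^ 2) := by
        rw [hscale, mul_one_div]
    _ ≤ b ^ (-β * (n : ℝ)) * 1 * |sin (π * (b ^ n * d))| := by
        gcongr
        exact rpow_le_one (by positivity) (by linarith [hn.2]) hβ.le
    _ ≤ 2 * b ^ (-β * (n : ℝ)) * |sin (π * (b ^ n * d))| := by
        rw [mul_one]
        gcongr
        exact le_mul_of_one_le_left (by positivity) one_le_two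
    _ = |incrementCoeff b β d n| := by
        rw [incrementCoeff, abs_mul, abs_of_nonneg (a := 2 * _) (by positivity)]

theorem enorm_incrementCoeff_rpow_neg_le (hb : 1 < b) (hβ : 0 < β) {s : ℝ} (hs : 0 ≤ s) {d : ℝ}
    {n : ℕ} (hn : b ^ n * |d| ∈ Icc (1 / (2 * b ^ 2)) (1 / 2)) :
    ‖incrementCoeff b β d n‖ₑ ^ (-s) ≤ ENNReal.ofReal (b ^ 2) ^ s * ‖d‖ₑ ^ (-(β * s)) := by
  have hlow : ‖d‖ₑ ^ β / ENNReal.ofReal (b ^ 2) ≤ ‖incrementCoeff b β d n‖ₑ := by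
    rw [Real.enorm_eq_ofReal_abs, Real.enorm_eq_ofReal_abs,
      ENNReal.ofReal_rpow_of_nonneg (abs_nonneg d) hβ.le,
      ← ENNReal.ofReal_div_of_pos (by positivity)]
    exact ENNReal.ofReal_le_ofReal (rpow_div_sq_le_abs_incrementCoeff hb hβ hn)
  calc ‖incrementCoeff b β d n‖ₑ ^ (-s) ≤ (‖d‖ₑ ^ β / ENNReal.ofReal (b ^ 2)) ^ (-s) := by
        simp only [ENNReal.rpow_neg]
        gcongr
    _ = _ := by
        rw [ENNReal.rpow_neg, ENNReal.div_rpow_of_nonneg _ _ hs, ← ENNReal.rpow_mul,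
          ENNReal.inv_div (.inl (ENNReal.rpow_ne_top_of_nonneg hs ENNReal.ofReal_ne_top))
            (.inl (ENNReal.rpow_pos (by positivity) ENNReal.ofReal_ne_top).ne'),
          div_eq_mul_inv, ← ENNReal.rpow_neg]

theorem exists_lintegral_enorm_sineSeries_incrementCoeff_rpow_neg_le (hb : 1 < b)
    (hβ : 0 < β) {s : ℝ} (hs₀ : 0 ≤ s) (hs₁ : s < 1) :
    ∃ C ≠ ∞, ∀ φ : ℕ → ℝ, ∀ d ≠ 0, |d| ≤ 1 / (2 * b) →
      ∫⁻ Θ, ‖sineSeries (incrementCoeff b β d) φ Θ‖ₑ ^ (-s) ∂uniformPhases ≤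
        C * ‖d‖ₑ ^ (-(β * s)) := by
  obtain ⟨C, hC, hle⟩ := exists_lintegral_enorm_sineSeries_rpow_neg_le hs₀ hs₁
  refine ⟨C * (2 * ENNReal.ofReal (b ^ 2) ^ s), ?_, fun φ d hd₀ hd => ?_⟩
  · exact ENNReal.mul_ne_top hC (ENNReal.mul_ne_top ENNReal.ofNat_ne_top
      (ENNReal.rpow_ne_top_of_nonneg hs₀ ENNReal.ofReal_ne_top))
  obtain ⟨n, hn, hn'⟩ := exists_pow_mul_mem_Icc hb (abs_pos.2 hd₀) hd
  have hcoeff : ∀ {k}, b ^ k * |d| ∈ Icc (1 / (2 * b ^ 2)) (1 / 2) → incrementCoeff b β d k ≠ 0 :=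
    fun hk => abs_pos.1 <|
      lt_of_lt_of_le (by positivity) (rpow_div_sq_le_abs_incrementCoeff hb hβ hk)
  calc _ ≤ C * (‖incrementCoeff b β d n‖ₑ ^ (-s) + ‖incrementCoeff b β d (n + 1)‖ₑ ^ (-s)) :=
        hle _ φ (summable_abs_incrementCoeff hb hβ d) n (n + 1) n.succ_ne_self.symm (hcoeff hn)
          (hcoeff hn')
    _ ≤ C * (ENNReal.ofReal (b ^ 2) ^ s * ‖d‖ₑ ^ (-(β * s)) +
          ENNReal.ofReal (b ^ 2) ^ s * ‖d‖ₑ ^ (-(β * s))) := by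
        gcongr <;> exact enorm_incrementCoeff_rpow_neg_le hb hβ hs₀ ‹_›
    _ = _ := by ring

end Weierstrass

/-! ### Expected energy of the graph -/

theorem max_rpow_neg_le {s σ : ℝ} (hs : 0 ≤ s) (hσ : 2 * s ≤ σ) (d x y : ℝ≥0∞) :
    max d (max x y) ^ (-σ) ≤ d ^ (-(σ - 2 * s)) * (x ^ (-s) * y ^ (-s)) := by
  simp only [ENNReal.rpow_neg, ← ENNReal.inv_rpow]
  set m := max d (max x y) with hm
  calc m⁻¹ ^ σ = m⁻¹ ^ ((σ - 2 * s) + (s + s)) := by ring_nf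
    _ = m⁻¹ ^ (σ - 2 * s) * (m⁻¹ ^ s * m⁻¹ ^ s) := by
        rw [ENNReal.rpow_add_of_nonneg _ _ (sub_nonneg.2 hσ) (add_nonneg hs hs),
          ENNReal.rpow_add_of_nonneg _ _ hs hs]
    _ ≤ d⁻¹ ^ (σ - 2 * s) * (x⁻¹ ^ s * y⁻¹ ^ s) := by
        gcongr
        all_goals simp [hm]

theorem lintegral_prod_max_rpow_neg_le {Ω₁ Ω₂ : Type*} [MeasurableSpace Ω₁] [MeasurableSpace Ω₂]
    {P : Measure Ω₁} {Q : Measure Ω₂} [SFinite Q] {X : Ω₁ → ℝ≥0∞} {Y : Ω₂ → ℝ≥0∞}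
    (hX : Measurable X) (hY : Measurable Y) {s σ : ℝ} (hs : 0 ≤ s) (hσ : 2 * s ≤ σ) (d : ℝ≥0∞) :
    ∫⁻ p, max d (max (X p.1) (Y p.2)) ^ (-σ) ∂P.prod Q ≤
      d ^ (-(σ - 2 * s)) * ((∫⁻ ω, X ω ^ (-s) ∂P) * ∫⁻ ω, Y ω ^ (-s) ∂Q) := calc
  _ ≤ ∫⁻ p, d ^ (-(σ - 2 * s)) * (X p.1 ^ (-s) * Y p.2 ^ (-s)) ∂P.prod Q :=
    lintegral_mono fun p => max_rpow_neg_le hs hσ d (X p.1) (Y p.2)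
  _ = _ := by
    rw [lintegral_const_mul _ (by fun_prop), ← lintegral_prod_mul (hX.pow_const _).aemeasurable
      (hY.pow_const _).aemeasurable]

theorem setLIntegral_Icc_kernel_ne_top {k : ℝ → ℝ → ℝ≥0∞} {C : ℝ≥0∞} (hC : C ≠ ∞) {δ γ : ℝ}
    (hγ₀ : 0 ≤ γ) (hγ : γ < 1)
    (hk : ∀ x y, x ≠ y → |x - y| ≤ δ → k x y ≤ C * ‖x - y‖ₑ ^ (-γ)) :
    ∫⁻ x in Icc 0 δ, ∫⁻ y in Icc 0 δ, k x y ≠ ∞ := by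
  obtain ⟨D, hD, hle⟩ := exists_setLIntegral_enorm_add_rpow_neg_le hγ₀ hγ
  have hinner : ∀ x ∈ Icc 0 δ, ∫⁻ y in Icc 0 δ, k x y ≤ C * (volume (Icc 0 δ) + D) := fun x hx =>
    calc ∫⁻ y in Icc 0 δ, k x y ≤ ∫⁻ y in Icc 0 δ, C * ‖y + -x‖ₑ ^ (-γ) := by
          refine setLIntegral_mono_ae' measurableSet_Icc ?_
          filter_upwards [Measure.ae_ne volume x] with y hyx hy
          rw [← sub_eq_add_neg, enorm_sub_rev]
          exact hk x y hyx.symm (abs_sub_le_of_nonneg_of_le hx.1 hx.2 hy.1 hy.2)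
      _ = C * ∫⁻ y in Icc 0 δ, ‖y + -x‖ₑ ^ (-γ) := lintegral_const_mul' _ _ hC
      _ ≤ C * (volume (Icc 0 δ) + D) := mul_le_mul_right (hle _ _) C
  refine ne_top_of_le_ne_top ?_ (setLIntegral_mono' measurableSet_Icc hinner)
  rw [setLIntegral_const, Real.volume_Icc]
  exact ENNReal.mul_ne_top
    (ENNReal.mul_ne_top hC (ENNReal.add_ne_top.2 ⟨ENNReal.ofReal_ne_top, hD⟩))
    ENNReal.ofReal_ne_top

theorem ae_le_of_forall_coe_lt {Ω : Type*} [MeasurableSpace Ω] {P : Measure Ω} {f : Ω → ℝ≥0∞}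
    {a : ℝ≥0∞} (h : ∀ c : ℝ≥0, c < a → ∀ᵐ ω ∂P, c ≤ f ω) : ∀ᵐ ω ∂P, a ≤ f ω := by
  have hrat : ∀ᵐ ω ∂P, ∀ q : ℚ, (q : ℝ).toNNReal < a → (q : ℝ).toNNReal ≤ f ω :=
    ae_all_iff.2 fun q => Filter.eventually_imp_distrib_left.2 (h _)
  filter_upwards [hrat] with ω hω
  refine le_of_not_gt fun hlt => ?_
  obtain ⟨q, -, hfq, hqa⟩ := ENNReal.lt_iff_exists_rat_btwn.1 hlt
  exact (hω q hqa).not_gt hfq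

section Graph

variable {b β : ℝ}

/-- The parametrization `t ↦ (t, f_{Θ,Λ}(t))` of the Weierstrass graph, with `p = (Θ, Λ)`. -/
noncomputable def graphMap (b β : ℝ) (p : (ℕ → ℝ) × (ℕ → ℝ)) (t : ℝ) : ℝ × ℝ × ℝ :=
  (t, W1 b β p.1 t, W2 b β p.2 t)

theorem image_graphMap_Icc (p : (ℕ → ℝ) × (ℕ → ℝ)) :
    graphMap b β p '' Icc 0 1 = Wgraph b β p.1 p.2 := by
  ext q
  simp only [mem_image, graphMap, Wgraph, mem_ofPred_eq, eq_comm]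

theorem continuous_graphMap (hb : 1 < b) (hβ : 0 < β) : Continuous (uncurry (graphMap b β)) := by
  have hW1 : Continuous fun q : ((ℕ → ℝ) × (ℕ → ℝ)) × ℝ => W1 b β q.1.1 q.2 :=
    (continuous_W1 hb hβ).comp₂ continuous_fst.fst continuous_snd
  have hW2 : Continuous fun q : ((ℕ → ℝ) × (ℕ → ℝ)) × ℝ => W2 b β q.1.2 q.2 :=
    (continuous_W2 hb hβ).comp₂ continuous_fst.snd continuous_snd
  exact continuous_snd.prodMk (hW1.prodMk hW2)

theorem edist_graphMap (hb : 1 < b) (hβ : 0 < β) (p : (ℕ → ℝ) × (ℕ → ℝ)) (x y : ℝ) :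
    edist (graphMap b β p x) (graphMap b β p y) = max ‖x - y‖ₑ (max
      ‖sineSeries (incrementCoeff b β (x - y)) (fun n => b ^ n * (x + y) / 2 + 1 / 2) p.1‖ₑ
      ‖sineSeries (incrementCoeff b β (x - y)) (fun n => b ^ n * (x + y) / 2 + 1 / 4) p.2‖ₑ) := by
  rw [← W1_sub_W1_eq_sineSeries hb hβ, ← W2_sub_W2_eq_sineSeries hb hβ]
  rw [Prod.edist_eq, Prod.edist_eq]
  simp only [graphMap, edist_eq_enorm_sub]

theorem exists_lintegral_edist_graphMap_rpow_neg_le (hb : 1 < b) (hβ : 0 < β) {s σ : ℝ}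
    (hs₀ : 0 ≤ s) (hs₁ : s < 1) (hσ : 2 * s ≤ σ) :
    ∃ C ≠ ∞, ∀ x y, x ≠ y → |x - y| ≤ 1 / (2 * b) →
      ∫⁻ p, edist (graphMap b β p x) (graphMap b β p y) ^ (-σ) ∂uniformPhases.prod uniformPhases ≤
        C * ‖x - y‖ₑ ^ (-(σ - 2 * s + 2 * (β * s))) := by
  obtain ⟨C, hC, hle⟩ := exists_lintegral_enorm_sineSeries_incrementCoeff_rpow_neg_le hb hβ hs₀ hs₁
  refine ⟨C * C, ENNReal.mul_ne_top hC hC, fun x y hxy hδ => ?_⟩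
  have hd : x - y ≠ 0 := sub_ne_zero.2 hxy
  have hmeas : ∀ φ, Measurable fun Θ => ‖sineSeries (incrementCoeff b β (x - y)) φ Θ‖ₑ := fun φ =>
    (continuous_sineSeries (summable_abs_incrementCoeff hb hβ _) φ).measurable.enorm
  simp only [edist_graphMap hb hβ]
  calc _ ≤ ‖x - y‖ₑ ^ (-(σ - 2 * s)) * _ :=
        lintegral_prod_max_rpow_neg_le (hmeas _) (hmeas _) hs₀ hσ _
    _ ≤ ‖x - y‖ₑ ^ (-(σ - 2 * s)) *
          (C * ‖x - y‖ₑ ^ (-(β * s)) * (C * ‖x - y‖ₑ ^ (-(β * s)))) := by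
        gcongr <;> exact hle _ _ hd hδ
    _ = C * C * (‖x - y‖ₑ ^ (-(σ - 2 * s)) *
          (‖x - y‖ₑ ^ (-(β * s)) * ‖x - y‖ₑ ^ (-(β * s)))) := by ring
    _ = C * C * ‖x - y‖ₑ ^ (-(σ - 2 * s + 2 * (β * s))) := by
        rw [← ENNReal.rpow_add _ _ (enorm_ne_zero.2 hd) enorm_ne_top,
          ← ENNReal.rpow_add _ _ (enorm_ne_zero.2 hd) enorm_ne_top]
        ring_nf

theorem exists_exponent_of_lt_min {β σ : ℝ} (hβ : 0 < β) (hσ₀ : 0 ≤ σ)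
    (hσ : σ < min (1 / β) (3 - 2 * β)) :
    ∃ s, 0 ≤ s ∧ s < 1 ∧ 2 * s ≤ σ ∧ σ - 2 * s + 2 * (β * s) < 1 := by
  obtain ⟨hσβ, hσ'⟩ := lt_min_iff.1 hσ
  -- The moment order is `σ / 2` while this is below `1`, and close to `1` otherwise.
  rcases lt_or_ge σ 2 with hσ₂ | hσ₂
  · rw [lt_div_iff₀ hβ] at hσβ
    exact ⟨σ / 2, by linarith, by linarith, by linarith, by linarith⟩
  · obtain ⟨s, hs, hs₁⟩ := exists_between (a₁ := (σ - 1) / (2 * (1 - β))) (a₂ := 1)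
      ((div_lt_one (by linarith)).2 (by linarith))
    rw [div_lt_iff₀ (by linarith)] at hs
    exact ⟨s, by nlinarith, hs₁, by linarith, by linarith⟩

theorem ae_le_dimH_Wgraph_of_lt (hb : 1 < b) (hβ : 0 < β) {σ : ℝ≥0}
    (hσ : σ < min (1 / β) (3 - 2 * β)) :
    ∀ᵐ p ∂uniformPhases.prod uniformPhases, σ ≤ dimH (Wgraph b β p.1 p.2) := by
  obtain ⟨s, hs₀, hs₁, hsσ, hγ⟩ := exists_exponent_of_lt_min hβ σ.2 hσ
  obtain ⟨C, hC, hkernel⟩ := exists_lintegral_edist_graphMap_rpow_neg_le hb hβ hs₀ hs₁ hsσ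
  let I : Set ℝ := Icc 0 (1 / (2 * b))
  have hI : volume.restrict I I ≠ 0 := by
    simp only [Measure.restrict_apply_self, I, Real.volume_Icc, sub_zero]
    exact (ENNReal.ofReal_pos.2 (by positivity)).ne'
  have hIsub : I ⊆ Icc 0 1 :=
    Icc_subset_Icc_right ((div_le_one (by positivity)).2 (by linarith))
  filter_upwards [ae_le_dimH_image_of_lintegral_edist_rpow_neg_ne_top
    (continuous_graphMap hb hβ).measurable
    (setLIntegral_Icc_kernel_ne_top hC (add_nonneg (sub_nonneg.2 hsσ) (by positivity)) hγ hkernel)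
    hI] with p hp
  rw [← image_graphMap_Icc]
  exact hp.trans (dimH_mono (image_mono hIsub))

end Graph

theorem stmt_8_general {b β : ℝ} (hb : 1 < b) (hβ : 0 < β) {μ : Measure (ℕ → ℝ)}
    (hμ : IsUniformProductMeasure μ) :
    ∀ᵐ p ∂μ.prod μ, ENNReal.ofReal (min (1 / β) (3 - 2 * β)) ≤ dimH (Wgraph b β p.1 p.2) := by
  rw [hμ.eq_uniformPhases]
  refine ae_le_of_forall_coe_lt fun σ hσ => ae_le_dimH_Wgraph_of_lt hb hβ ?_
  rw [← ENNReal.ofReal_coe_nnreal, ENNReal.ofReal_lt_ofReal_iff'] at hσ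
  exact hσ.1

theorem three_sub_two_mul_le_one_div {β : ℝ} (hβ₀ : 0 < β) (hβ : β ≤ 1 / 2) :
    3 - 2 * β ≤ 1 / β := by
  rw [le_div_iff₀ hβ₀]
  nlinarith

/-- for a.e. pair of phase sequences, the Hausdorff dimension of the
graph is at least `3 - 2β`. -/
theorem stmt_8 (b β : ℝ) (hb : 1 < b) (hβ : β ∈ Set.Ioo (0 : ℝ) (1 / 2))
    (μ : Measure (ℕ → ℝ)) (hμ : IsUniformProductMeasure μ) :
    ∀ᵐ p ∂ μ.prod μ, ENNReal.ofReal (3 - 2 * β) ≤ dimH (Wgraph b β p.1 p.2) := by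
  simpa only [min_eq_right (three_sub_two_mul_le_one_div hβ.1 hβ.2.le)] using
    stmt_8_general hb hβ.1 hμ
end

section
/- Let b > 1 and β ∈ (0, 1/2). There exists a constant C₃ > 0, depending only on b and β, such that for all x, y ∈ [0,1] with 0 < |x − y| ≤ 1/(2b²), the real random variable X₁(Θ) = Σ_{n=0}^∞ 2 b^{−βn} sin(π bⁿ(x + y) + 2πθ_n) sin(π bⁿ(y − x)), where Θ = (θ_n) is a sequence of i.i.d. uniform random variables on [0,1], has a probability density function h_{X₁} : ℝ → [0, ∞) with respect to Lebesgue measure satisfying h_{X₁}(t) ≤ C₃ |x − y|^{−β} for all t ∈ ℝ. -/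
open MeasureTheory

/-!
The `n`-th term of the series is `aₙ` times the sine of a uniformly distributed phase, so it has
the arcsine law scaled by its amplitude `aₙ`. The arcsine density is unbounded, but it lies in
`L^p` for every `p < 2`, in particular in `L^{3/2}`, and by Young's inequality the convolution of
three densities in `L^{3/2}` is bounded, since `3 · (2 / 3) = 2`. If the three amplitudes are at
least `δ`, scaling gives a bound of order `δ⁻¹`; the sum of all other terms is independent of these
three, and convolution with its law does not increase the bound. Finally, there are three
consecutive `n` with `1 / (2 b³) ≤ bⁿ |x - y| ≤ 1 / 2`, for which `aₙ` is of order `|x - y| ^ β`.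
-/

open scoped ENNReal

section Young

lemma lintegral_rpow_mul_rpow_mul_rpow_le {α : Type*} [MeasurableSpace α] {μ : Measure α}
    {f g h : α → ℝ≥0∞} (hf : AEMeasurable f μ) (hg : AEMeasurable g μ) (hh : AEMeasurable h μ)
    {a b c : ℝ} (ha : 0 ≤ a) (hb : 0 ≤ b) (hc : 0 ≤ c) (habc : a + b + c = 1) :
    ∫⁻ x, f x ^ a * g x ^ b * h x ^ c ∂μ ≤
      (∫⁻ x, f x ∂μ) ^ a * (∫⁻ x, g x ∂μ) ^ b * (∫⁻ x, h x ∂μ) ^ c := by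
  simpa [Fin.prod_univ_three] using
    ENNReal.lintegral_prod_norm_pow_le (μ := μ) Finset.univ (f := ![f, g, h]) (p := ![a, b, c])
      (by simp [Fin.forall_fin_succ, hf, hg, hh]) (by simp [Fin.sum_univ_three, habc])
      (by simp [Fin.forall_fin_succ, ha, hb, hc])

/- This rewriting makes Hölder's inequality yield Young's: each factor on the left involves only two
of the three functions, so that its double integral splits into a product. -/
lemma mul_rpow_mul_mul_rpow_mul_mul_rpow {a b c : ℝ} (ha : a ≤ 1) (hb : b ≤ 1) (hc : c ≤ 1)
    (habc : a + b + c = 2) (u v w : ℝ≥0∞) :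
    (u * v) ^ (1 - c) * (u * w) ^ (1 - b) * (v * w) ^ (1 - a) = u ^ a * v ^ b * w ^ c := by
  rw [ENNReal.mul_rpow_of_nonneg _ _ (sub_nonneg.2 ha),
    ENNReal.mul_rpow_of_nonneg _ _ (sub_nonneg.2 hb),
    ENNReal.mul_rpow_of_nonneg _ _ (sub_nonneg.2 hc)]
  calc
    _ = (u ^ (1 - c) * u ^ (1 - b)) * (v ^ (1 - c) * v ^ (1 - a)) *
        (w ^ (1 - b) * w ^ (1 - a)) := by ring
    _ = u ^ a * v ^ b * w ^ c := by
      simp only [← ENNReal.rpow_add_of_nonneg _ _ (sub_nonneg.2 hc) (sub_nonneg.2 ha),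
        ← ENNReal.rpow_add_of_nonneg _ _ (sub_nonneg.2 hb) (sub_nonneg.2 ha),
        ← ENNReal.rpow_add_of_nonneg _ _ (sub_nonneg.2 hc) (sub_nonneg.2 hb)]
      congr <;> linarith

variable {G : Type*} [AddCommGroup G] [MeasurableSpace G] [MeasurableAdd₂ G] [MeasurableNeg G]
  {μ : Measure G} [SFinite μ]

lemma lconvolution_lconvolution_eq_lintegral_prod {f g h : G → ℝ≥0∞} (hf : Measurable f)
    (hg : Measurable g) (hh : Measurable h) (x : G) :
    (f ⋆ₗ[μ] g ⋆ₗ[μ] h) x = ∫⁻ y, f y.1 * g y.2 * h (x - y.1 - y.2) ∂μ.prod μ := by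
  rw [lintegral_prod _ (by fun_prop)]
  simp only [lconvolution_def]
  refine lintegral_congr fun y => ?_
  rw [← lintegral_const_mul _ (by fun_prop)]
  refine lintegral_congr fun z => ?_
  rw [← mul_assoc, show -z + (-y + x) = x - y - z by abel]

variable [μ.IsAddLeftInvariant] [μ.IsNegInvariant]

lemma lintegral_prod_mul_comp_sub {f g : G → ℝ≥0∞} (hf : Measurable f) (hg : Measurable g)
    (x : G) :
    ∫⁻ y, f y.1 * g (x - y.1 - y.2) ∂μ.prod μ = (∫⁻ y, f y ∂μ) * ∫⁻ z, g z ∂μ := by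
  rw [lintegral_prod _ (by fun_prop), ← lintegral_mul_const _ hf]
  refine lintegral_congr fun y => ?_
  dsimp only
  rw [lintegral_const_mul _ (by fun_prop), lintegral_sub_left_eq_self g]

lemma lconvolution_lconvolution_le {p q r : ℝ} (hp : 1 ≤ p) (hq : 1 ≤ q)
    (hr : 1 ≤ r) (hpqr : p⁻¹ + q⁻¹ + r⁻¹ = 2) {f g h : G → ℝ≥0∞} (hf : Measurable f)
    (hg : Measurable g) (hh : Measurable h) (x : G) :
    (f ⋆ₗ[μ] g ⋆ₗ[μ] h) x ≤
      (∫⁻ y, f y ^ p ∂μ) ^ p⁻¹ * (∫⁻ y, g y ^ q ∂μ) ^ q⁻¹ * (∫⁻ y, h y ^ r ∂μ) ^ r⁻¹ := by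
  have hp' := inv_le_one_of_one_le₀ hp
  have hq' := inv_le_one_of_one_le₀ hq
  have hr' := inv_le_one_of_one_le₀ hr
  have hfg : ∫⁻ y, f y.1 ^ p * g y.2 ^ q ∂μ.prod μ = (∫⁻ y, f y ^ p ∂μ) * ∫⁻ y, g y ^ q ∂μ :=
    lintegral_prod_mul (hf.pow_const p).aemeasurable (hg.pow_const q).aemeasurable
  have hfh : ∫⁻ y, f y.1 ^ p * h (x - y.1 - y.2) ^ r ∂μ.prod μ =
      (∫⁻ y, f y ^ p ∂μ) * ∫⁻ y, h y ^ r ∂μ :=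
    lintegral_prod_mul_comp_sub (hf.pow_const p) (hh.pow_const r) x
  have hgh : ∫⁻ y, g y.2 ^ q * h (x - y.1 - y.2) ^ r ∂μ.prod μ =
      (∫⁻ y, g y ^ q ∂μ) * ∫⁻ y, h y ^ r ∂μ := by
    rw [← lintegral_prod_mul_comp_sub (hg.pow_const q) (hh.pow_const r) x,
      ← lintegral_prod_swap]
    simp only [Prod.fst_swap, Prod.snd_swap, sub_right_comm]
  calc (f ⋆ₗ[μ] g ⋆ₗ[μ] h) x
      = ∫⁻ y, (f y.1 ^ p * g y.2 ^ q) ^ (1 - r⁻¹) *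
          (f y.1 ^ p * h (x - y.1 - y.2) ^ r) ^ (1 - q⁻¹) *
          (g y.2 ^ q * h (x - y.1 - y.2) ^ r) ^ (1 - p⁻¹) ∂μ.prod μ := by
        rw [lconvolution_lconvolution_eq_lintegral_prod hf hg hh]
        refine lintegral_congr fun y => ?_
        rw [mul_rpow_mul_mul_rpow_mul_mul_rpow hp' hq' hr' hpqr]
        simp only [ENNReal.rpow_rpow_inv (zero_lt_one.trans_le hp).ne',
          ENNReal.rpow_rpow_inv (zero_lt_one.trans_le hq).ne',
          ENNReal.rpow_rpow_inv (zero_lt_one.trans_le hr).ne']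
    _ ≤ _ := lintegral_rpow_mul_rpow_mul_rpow_le (by fun_prop) (by fun_prop) (by fun_prop)
          (sub_nonneg.2 hr') (sub_nonneg.2 hq') (sub_nonneg.2 hp') (by linarith)
    _ = _ := by rw [hfg, hfh, hgh, mul_rpow_mul_mul_rpow_mul_mul_rpow hp' hq' hr' hpqr]

end Young

section Convolution

variable {G : Type*} [AddGroup G] [MeasurableSpace G] [MeasurableAdd₂ G]
  {μ ν ρ : Measure G}

lemma conv_le_smul [SFinite ν] [IsProbabilityMeasure ρ] [μ.IsAddLeftInvariant] {c : ℝ≥0∞}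
    (hν : ν ≤ c • μ) : ρ ∗ ν ≤ c • μ := by
  refine Measure.le_iff.2 fun s hs => ?_
  calc (ρ ∗ ν) s = ∫⁻ x, ν ((x + ·) ⁻¹' s) ∂ρ := by
        rw [Measure.conv, Measure.map_apply measurable_add hs,
          Measure.prod_apply (measurable_add hs)]
        rfl
    _ ≤ ∫⁻ _, (c • μ) s ∂ρ := lintegral_mono fun x => (hν _).trans_eq <| by
        simp only [Measure.smul_apply, measure_preimage_add]
    _ = (c • μ) s := by simp only [lintegral_const, measure_univ, mul_one]

end Convolution

lemma exists_density_le {α : Type*} [MeasurableSpace α] {μ ν : Measure α} [SigmaFinite μ]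
    [SFinite ν] {c : ℝ} (hc : 0 ≤ c) (h : ν ≤ ENNReal.ofReal c • μ) :
    ∃ f : α → ℝ, (∀ t, 0 ≤ f t) ∧ ν = μ.withDensity (fun t => ENNReal.ofReal (f t)) ∧
      ∀ t, f t ≤ c := by
  have hac : ν ≪ μ := (Measure.absolutelyContinuous_of_le h).trans
    Measure.smul_absolutelyContinuous
  have hle : ν.rnDeriv μ ≤ᵐ[μ] fun _ => ENNReal.ofReal c :=
    ae_le_of_forall_setLIntegral_le_of_sigmaFinite (Measure.measurable_rnDeriv _ _)
      fun s _ _ => by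
        rw [setLIntegral_const]
        exact (Measure.setLIntegral_rnDeriv_le s).trans (h s)
  refine ⟨fun t => min c (ν.rnDeriv μ t).toReal, fun t => le_min hc ENNReal.toReal_nonneg, ?_,
    fun t => min_le_left _ _⟩
  conv_lhs => rw [← Measure.withDensity_rnDeriv_eq ν μ hac]
  refine withDensity_congr_ae ?_
  filter_upwards [hle] with t ht
  have hfin := ne_top_of_le_ne_top ENNReal.ofReal_ne_top ht
  rw [min_eq_right (ENNReal.toReal_le_of_le_ofReal hc ht), ENNReal.ofReal_toReal hfin]

section Independence
open ProbabilityTheory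

variable {Ω : Type*} [MeasurableSpace Ω] {P : Measure Ω}

lemma indepFun_restrict_of_disjoint {ι : Type*} {β : ι → Type*} [∀ i, MeasurableSpace (β i)]
    {X : ∀ i, Ω → β i} (hX : iIndepFun X P) (hXm : ∀ i, Measurable (X i)) {S T : Set ι}
    (hST : Disjoint S T) :
    IndepFun (fun ω (i : S) => X i ω) (fun ω (i : T) => X i ω) P := by
  have hcomap (U : Set ι) : MeasurableSpace.comap (fun ω (i : U) => X i ω) MeasurableSpace.pi =
      ⨆ i ∈ U, MeasurableSpace.comap (X i) inferInstance := by
    simp only [MeasurableSpace.pi, MeasurableSpace.comap_iSup, MeasurableSpace.comap_comp,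
      iSup_subtype']
    rfl
  rw [IndepFun_iff_Indep, hcomap, hcomap]
  exact indep_iSup_of_disjoint (fun i => (hXm i).comap_le) hX.iIndep hST

lemma map_tsum_le_of_map_sum_le {ι : Type*} [Countable ι] {Y : ι → Ω → ℝ} (hY : iIndepFun Y P)
    (hYm : ∀ n, Measurable (Y n)) (hsum : ∀ ω, Summable fun n => Y n ω) (s : Finset ι) {c : ℝ≥0∞}
    (hs : P.map (fun ω => ∑ n ∈ s, Y n ω) ≤ c • volume) :
    P.map (fun ω => ∑' n, Y n ω) ≤ c • volume := by
  have := hY.isProbabilityMeasure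
  have htail : Measurable fun ω => ∑' n : ↥(sᶜ : Set ι), Y n ω :=
    Measurable.tsum fun n : ↥(sᶜ : Set ι) => hYm n
  have hind : IndepFun (fun ω => ∑' n : ↥(sᶜ : Set ι), Y n ω) (fun ω => ∑ n ∈ s, Y n ω) P := by
    have h := (indepFun_restrict_of_disjoint hY hYm (disjoint_compl_left (a := (s : Set ι)))).comp
      (φ := fun z => ∑' n, z n) (ψ := fun z => ∑ n ∈ s.attach, z ⟨n, n.2⟩)
      (Measurable.tsum fun n => measurable_pi_apply n) (by fun_prop)
    simpa only [Function.comp_def, ← Finset.sum_attach s] using h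
  have := Measure.isProbabilityMeasure_map (μ := P) htail.aemeasurable
  calc P.map (fun ω => ∑' n, Y n ω)
      = P.map ((fun ω => ∑' n : ↥(sᶜ : Set ι), Y n ω) + fun ω => ∑ n ∈ s, Y n ω) := by
        congr with ω
        rw [Pi.add_apply, add_comm, (hsum ω).sum_add_tsum_compl]
    _ = P.map (fun ω => ∑' n : ↥(sᶜ : Set ι), Y n ω) ∗ P.map (fun ω => ∑ n ∈ s, Y n ω) :=
        hind.map_add_eq_map_conv_map htail (by fun_prop)
    _ ≤ c • volume := conv_le_smul hs

end Independence

section Arcsine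
open Real Set

/-- The density of the arcsine law, i.e. of `sin U` for a uniformly distributed phase `U`. For
`1 ≤ |x|` the square root vanishes, and `0⁻¹ = 0` gives the correct value `0`. -/
noncomputable def arcsinePDF (x : ℝ) : ℝ≥0∞ :=
  ENNReal.ofReal (π * √(1 - x ^ 2))⁻¹

lemma measurable_arcsinePDF : Measurable arcsinePDF := by
  unfold arcsinePDF
  fun_prop

lemma arcsinePDF_eq_zero {x : ℝ} (hx : x ∉ Ioo (-1) 1) : arcsinePDF x = 0 := by
  have hx' : 1 - x ^ 2 ≤ 0 :=
    sub_nonpos.2 ((one_le_sq_iff_one_le_abs x).2 (le_of_not_gt fun h => hx (abs_lt.1 h)))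
  rw [arcsinePDF, sqrt_eq_zero_of_nonpos hx', mul_zero, inv_zero, ENNReal.ofReal_zero]

lemma setLIntegral_Ioc_eq_of_periodic_s11 {f : ℝ → ℝ≥0∞} {T : ℝ} (hT : 0 < T)
    (hf : f.Periodic T) (a b : ℝ) :
    ∫⁻ x in Ioc a (a + T), f x = ∫⁻ x in Ioc b (b + T), f x := by
  have : Fact (0 < T) := ⟨hT⟩
  exact (AddCircle.lintegral_preimage T a hf.lift).trans
    (AddCircle.lintegral_preimage T b hf.lift).symm

lemma setLIntegral_Icc_comp_add_eq_of_periodic {f : ℝ → ℝ≥0∞} {T : ℝ} (hT : 0 < T)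
    (hf : f.Periodic T) (a b s : ℝ) :
    ∫⁻ x in Icc a (a + T), f (x + s) = ∫⁻ x in Ioc b (b + T), f x := by
  rw [setLIntegral_congr Ioc_ae_eq_Icc.symm, ← setLIntegral_Ioc_eq_of_periodic_s11 hT hf (a + s),
    ← (measurePreserving_add_right volume s).setLIntegral_comp_preimage_emb
      (measurableEmbedding_addRight s) f, preimage_add_const_Ioc]
  congr 3 <;> ring

lemma image_arcsin_div_two_pi_Ioo :
    (fun x => arcsin x / (2 * π)) '' Ioo (-1) 1 = Ioo (-(1 / 4)) (1 / 4) := by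
  rw [← image_image (· / (2 * π)) arcsin,
    show arcsin '' Ioo (-1) 1 = Ioo (-(π / 2)) (π / 2) from
      sinPartialHomeomorph.symm.image_source_eq_target]
  simp only [div_eq_mul_inv _ (2 * π)]
  rw [image_mul_right_Ioo _ _ (inv_pos.2 two_pi_pos)]
  congr 1 <;> field_simp <;> norm_num

lemma two_mul_setLIntegral_Ioo_comp_sin (u : ℝ → ℝ≥0∞) :
    2 * ∫⁻ t in Ioo (-(1 / 4)) (1 / 4), u (sin (2 * π * t)) = ∫⁻ x, arcsinePDF x * u x := by
  have hderiv (x : ℝ) (hx : x ∈ Ioo (-1) 1) : HasDerivWithinAt (fun x => arcsin x / (2 * π))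
      (1 / √(1 - x ^ 2) / (2 * π)) (Ioo (-1) 1) x :=
    ((hasDerivAt_arcsin hx.1.ne' hx.2.ne).div_const _).hasDerivWithinAt
  have hinj : InjOn (fun x => arcsin x / (2 * π)) (Ioo (-1) 1) := by
    intro x hx y hy h
    exact injOn_arcsin (Ioo_subset_Icc_self hx) (Ioo_subset_Icc_self hy)
      ((div_left_inj' two_pi_pos.ne').1 h)
  have hsupp : Function.support (fun x => arcsinePDF x * u x) ⊆ Ioo (-1) 1 := by
    intro x
    contrapose!
    intro hx
    simp [arcsinePDF_eq_zero hx]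
  rw [← image_arcsin_div_two_pi_Ioo,
    lintegral_image_eq_lintegral_abs_deriv_mul measurableSet_Ioo hderiv hinj,
    ← lintegral_const_mul' _ _ ENNReal.ofNat_ne_top, ← setLIntegral_eq_of_support_subset hsupp]
  refine setLIntegral_congr_fun measurableSet_Ioo fun x hx => ?_
  rw [mul_div_cancel₀ _ two_pi_pos.ne', sin_arcsin hx.1.le hx.2.le, ← mul_assoc, arcsinePDF,
    abs_of_nonneg (by positivity), ← ENNReal.ofReal_ofNat, ← ENNReal.ofReal_mul zero_le_two]
  congr 2
  field_simp

lemma setLIntegral_comp_sin_eq (φ : ℝ) (u : ℝ → ℝ≥0∞) :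
    ∫⁻ t in Icc 0 1, u (sin (φ + 2 * π * t)) = ∫⁻ x, arcsinePDF x * u x := by
  set v : ℝ → ℝ≥0∞ := fun t => u (sin (2 * π * t)) with hv
  have hper : v.Periodic 1 := fun t => by simp only [hv, mul_add, mul_one, sin_add_two_pi]
  have hreflect : ∫⁻ t in Ioc (1 / 4) (3 / 4), v t = ∫⁻ t in Ioo (-(1 / 4)) (1 / 4), v t := by
    rw [setLIntegral_congr (Ioo_ae_eq_Ioc.symm : Ioc (1 / 4 : ℝ) (3 / 4) =ᵐ[volume] _),
      ← (volume.measurePreserving_sub_left (1 / 2 : ℝ)).setLIntegral_comp_preimage_emb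
      (measurableEmbedding_subLeft (1 / 2)), preimage_const_sub_Ioo]
    have hsin (t : ℝ) : v (1 / 2 - t) = v t := by
      simp only [hv]
      rw [← sin_pi_sub]
      ring_nf
    norm_num [hsin]
  calc ∫⁻ t in Icc 0 1, u (sin (φ + 2 * π * t))
      = ∫⁻ t in Icc 0 (0 + 1), v (t + φ / (2 * π)) := by
        simp only [hv, mul_add, mul_div_cancel₀ _ two_pi_pos.ne', zero_add, add_comm]
    _ = ∫⁻ t in Ioc (-(1 / 4)) (-(1 / 4) + 1), v t :=
        setLIntegral_Icc_comp_add_eq_of_periodic one_pos hper _ _ _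
    _ = (∫⁻ t in Ioc (-(1 / 4)) (1 / 4), v t) + ∫⁻ t in Ioc (1 / 4) (3 / 4), v t := by
        rw [← lintegral_union measurableSet_Ioc (Ioc_disjoint_Ioc_of_le le_rfl),
          Ioc_union_Ioc_eq_Ioc (by norm_num) (by norm_num)]
        norm_num
    _ = 2 * ∫⁻ t in Ioo (-(1 / 4)) (1 / 4), v t := by
        rw [hreflect, setLIntegral_congr Ioo_ae_eq_Ioc.symm, two_mul]
    _ = ∫⁻ x, arcsinePDF x * u x := two_mul_setLIntegral_Ioo_comp_sin u

lemma map_sin_restrict_Icc_eq_withDensity (φ : ℝ) :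
    (volume.restrict (Icc 0 1)).map (fun t => sin (φ + 2 * π * t)) =
      volume.withDensity arcsinePDF := by
  refine Measure.ext_of_lintegral _ fun u hu => ?_
  rw [lintegral_map hu (by fun_prop), setLIntegral_comp_sin_eq,
    lintegral_withDensity_eq_lintegral_mul _ measurable_arcsinePDF hu]
  rfl

lemma arcsinePDF_le {x : ℝ} (hx : x ∈ Ioo (-1) 1) :
    arcsinePDF x ≤ ENNReal.ofReal ((1 - |x|) ^ (-(1 / 2) : ℝ)) := by
  have hx' : 0 < 1 - |x| := sub_pos.2 (abs_lt.2 hx)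
  rw [arcsinePDF, rpow_neg hx'.le, ← sqrt_eq_rpow]
  refine ENNReal.ofReal_le_ofReal (inv_anti₀ (sqrt_pos.2 hx') ?_)
  calc √(1 - |x|) ≤ √(1 - x ^ 2) := sqrt_le_sqrt (by nlinarith [sq_abs x, abs_nonneg x])
    _ ≤ π * √(1 - x ^ 2) :=
        le_mul_of_one_le_left (sqrt_nonneg _) (by linarith [pi_gt_three])

lemma integrableOn_one_sub_rpow_add_one_add_rpow {s : ℝ} (hs : -1 < s) :
    IntegrableOn (fun x : ℝ => (1 - x) ^ s + (1 + x) ^ s) (Ioo (-1) 1) := by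
  have h : IntervalIntegrable (fun x : ℝ => x ^ s) volume 0 2 :=
    intervalIntegral.intervalIntegrable_rpow' hs
  have hsub : IntervalIntegrable (fun x : ℝ => (1 - x) ^ s) volume (-1) 1 := by
    convert (h.comp_sub_left 1).symm using 1 <;> norm_num
  have hadd : IntervalIntegrable (fun x : ℝ => (1 + x) ^ s) volume (-1) 1 := by
    convert h.comp_add_left 1 using 1 <;> norm_num
  exact (hsub.add hadd).1.mono_set Ioo_subset_Ioc_self

lemma lintegral_arcsinePDF_rpow_lt_top {p : ℝ} (hp : 0 < p) (hp2 : p < 2) :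
    ∫⁻ x, arcsinePDF x ^ p < ⊤ := by
  have hsupp : Function.support (fun x => arcsinePDF x ^ p) ⊆ Ioo (-1) 1 := by
    intro x
    contrapose!
    intro hx
    simp [arcsinePDF_eq_zero hx, hp]
  rw [← setLIntegral_eq_of_support_subset hsupp]
  refine lt_of_le_of_lt (setLIntegral_mono' measurableSet_Ioo fun x hx => ?_)
    (integrableOn_one_sub_rpow_add_one_add_rpow (s := -(1 / 2) * p) (by linarith)).lintegral_lt_top
  have hx' : 0 ≤ 1 - |x| := sub_nonneg.2 (abs_lt.2 hx).le
  calc arcsinePDF x ^ p ≤ ENNReal.ofReal ((1 - |x|) ^ (-(1 / 2) : ℝ)) ^ p :=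
        ENNReal.rpow_le_rpow (arcsinePDF_le hx) hp.le
    _ = ENNReal.ofReal ((1 - |x|) ^ (-(1 / 2) * p)) := by
        rw [ENNReal.ofReal_rpow_of_nonneg (by positivity) hp.le, rpow_mul hx']
    _ ≤ ENNReal.ofReal ((1 - x) ^ (-(1 / 2) * p) + (1 + x) ^ (-(1 / 2) * p)) := by
        have hsub : 0 ≤ (1 - x) ^ (-(1 / 2) * p) := rpow_nonneg (by linarith [hx.2]) _
        have hadd : 0 ≤ (1 + x) ^ (-(1 / 2) * p) := rpow_nonneg (by linarith [hx.1]) _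
        refine ENNReal.ofReal_le_ofReal ?_
        rcases abs_cases x with ⟨h, -⟩ | ⟨h, -⟩ <;> rw [h]
        · linarith
        · rw [sub_neg_eq_add]
          linarith

end Arcsine

section Scaling

lemma lintegral_comp_mul_left {f : ℝ → ℝ≥0∞} (hf : Measurable f) {a : ℝ} (ha : a ≠ 0) :
    ∫⁻ x, f (a * x) = ENNReal.ofReal |a⁻¹| * ∫⁻ x, f x := by
  rw [← lintegral_map hf (measurable_const_mul a), Real.map_volume_mul_left ha,
    lintegral_smul_measure, smul_eq_mul]

/-- The density of `a * Z` when the random variable `Z` has density `f` and `a ≠ 0`. -/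
noncomputable def scaleDensity (f : ℝ → ℝ≥0∞) (a x : ℝ) : ℝ≥0∞ :=
  ENNReal.ofReal |a⁻¹| * f (a⁻¹ * x)

lemma measurable_scaleDensity {f : ℝ → ℝ≥0∞} (hf : Measurable f) (a : ℝ) :
    Measurable (scaleDensity f a) :=
  (hf.comp (measurable_const_mul _)).const_mul _

lemma map_mul_left_withDensity {f : ℝ → ℝ≥0∞} (hf : Measurable f) {a : ℝ} (ha : a ≠ 0) :
    (volume.withDensity f).map (a * ·) = volume.withDensity (scaleDensity f a) := by
  refine Measure.ext_of_lintegral _ fun u hu => ?_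
  calc ∫⁻ x, u x ∂(volume.withDensity f).map (a * ·)
      = ∫⁻ x, f (a⁻¹ * (a * x)) * u (a * x) := by
        rw [lintegral_map hu (measurable_const_mul a),
          lintegral_withDensity_eq_lintegral_mul _ hf (by fun_prop)]
        simp only [Pi.mul_apply, inv_mul_cancel_left₀ ha]
    _ = ENNReal.ofReal |a⁻¹| * ∫⁻ x, f (a⁻¹ * x) * u x :=
        lintegral_comp_mul_left (f := fun x => f (a⁻¹ * x) * u x) (by fun_prop) ha
    _ = ∫⁻ x, u x ∂volume.withDensity (scaleDensity f a) := by
        rw [lintegral_withDensity_eq_lintegral_mul _ (measurable_scaleDensity hf a) hu,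
          ← lintegral_const_mul _ (by fun_prop)]
        simp only [Pi.mul_apply, scaleDensity, mul_assoc]

lemma lintegral_scaleDensity_rpow {f : ℝ → ℝ≥0∞} (hf : Measurable f) {a : ℝ} (ha : a ≠ 0) {p : ℝ}
    (hp : 0 < p) :
    (∫⁻ x, scaleDensity f a x ^ p) ^ p⁻¹ =
      ENNReal.ofReal |a⁻¹| ^ (1 - p⁻¹) * (∫⁻ x, f x ^ p) ^ p⁻¹ := by
  have hk : ENNReal.ofReal |a⁻¹| ≠ 0 := by simpa using ha
  have hscale : ENNReal.ofReal |a⁻¹⁻¹| = ENNReal.ofReal |a⁻¹| ^ (-1 : ℝ) := by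
    rw [ENNReal.rpow_neg_one, abs_inv a⁻¹, ENNReal.ofReal_inv_of_pos (by positivity)]
  simp only [scaleDensity, ENNReal.mul_rpow_of_nonneg _ _ hp.le]
  rw [lintegral_const_mul _ (by fun_prop),
    lintegral_comp_mul_left (hf.pow_const p) (inv_ne_zero ha), hscale, ← mul_assoc,
    ← ENNReal.rpow_add _ _ hk ENNReal.ofReal_ne_top,
    ENNReal.mul_rpow_of_nonneg _ _ (inv_nonneg.2 hp.le), ← ENNReal.rpow_mul]
  congr 2
  field_simp
  ring

end Scaling

section Series
open ProbabilityTheory Real Set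

lemma lconvolution_lconvolution_scaleDensity_le {f : ℝ → ℝ≥0∞} (hf : Measurable f) {δ a b c : ℝ}
    (hδ : 0 < δ) (ha : δ ≤ |a|) (hb : δ ≤ |b|) (hc : δ ≤ |c|) (x : ℝ) :
    (scaleDensity f a ⋆ₗ scaleDensity f b ⋆ₗ scaleDensity f c) x ≤
      ENNReal.ofReal δ⁻¹ * (∫⁻ y, f y ^ (3 / 2 : ℝ)) ^ 2 := by
  have hnorm {t : ℝ} (ht : δ ≤ |t|) : (∫⁻ y, scaleDensity f t y ^ (3 / 2 : ℝ)) ^ (3 / 2 : ℝ)⁻¹ ≤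
      ENNReal.ofReal δ⁻¹ ^ (1 / 3 : ℝ) * (∫⁻ y, f y ^ (3 / 2 : ℝ)) ^ (2 / 3 : ℝ) := by
    rw [lintegral_scaleDensity_rpow hf (abs_pos.1 (hδ.trans_le ht)) (by norm_num), abs_inv,
      show (1 - (3 / 2 : ℝ)⁻¹) = 1 / 3 by norm_num, inv_div]
    gcongr
  refine (lconvolution_lconvolution_le (p := 3 / 2) (q := 3 / 2) (r := 3 / 2) (by norm_num)
    (by norm_num) (by norm_num) (by norm_num) (measurable_scaleDensity hf a)
    (measurable_scaleDensity hf b) (measurable_scaleDensity hf c) x).trans ?_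
  refine (mul_le_mul' (mul_le_mul' (hnorm ha) (hnorm hb)) (hnorm hc)).trans_eq ?_
  rw [← pow_three', mul_pow, ← ENNReal.rpow_mul_natCast, ← ENNReal.rpow_mul_natCast,
    show (1 / 3 : ℝ) * (3 : ℕ) = 1 by norm_num, show (2 / 3 : ℝ) * (3 : ℕ) = (2 : ℕ) by norm_num,
    ENNReal.rpow_one, ENNReal.rpow_natCast]

variable {Ω : Type*} [MeasurableSpace Ω] {P : Measure Ω}

lemma map_add_add_eq_withDensity_lconvolution {ι : Type*} {Y : ι → Ω → ℝ} (hY : iIndepFun Y P)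
    (hYm : ∀ n, Measurable (Y n)) {i j k : ι} (hij : i ≠ j) (hik : i ≠ k) (hjk : j ≠ k)
    {f g h : ℝ → ℝ≥0∞} (hf : Measurable f) (hg : Measurable g) (hh : Measurable h)
    (hi : P.map (Y i) = volume.withDensity f) (hj : P.map (Y j) = volume.withDensity g)
    (hk : P.map (Y k) = volume.withDensity h) :
    P.map (Y i + (Y j + Y k)) = volume.withDensity (f ⋆ₗ g ⋆ₗ h) := by
  have := hY.isProbabilityMeasure
  rw [(hY.indepFun_add_right hYm i j k hij hik).map_add_eq_map_conv_map (hYm i)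
      ((hYm j).add (hYm k)),
    (hY.indepFun hjk).map_add_eq_map_conv_map (hYm j) (hYm k), hi, hj, hk,
    conv_withDensity_eq_lconvolution hg hh,
    conv_withDensity_eq_lconvolution hf (measurable_lconvolution _ hg hh)]

lemma map_mul_sin_eq_withDensity {X : Ω → ℝ} (hX : Measurable X)
    (hunif : P.map X = volume.restrict (Icc 0 1)) {a : ℝ} (ha : a ≠ 0) (φ : ℝ) :
    P.map (fun ω => a * sin (φ + 2 * π * X ω)) =
      volume.withDensity (scaleDensity arcsinePDF a) := by
  rw [← map_mul_left_withDensity measurable_arcsinePDF ha,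
    ← map_sin_restrict_Icc_eq_withDensity φ, ← hunif, Measure.map_map (by fun_prop) hX,
    Measure.map_map (by fun_prop) (by fun_prop)]
  rfl

theorem map_tsum_mul_sin_le {ι : Type*} [Countable ι] {X : ι → Ω → ℝ} (hX : iIndepFun X P)
    (hXm : ∀ n, Measurable (X n)) (hunif : ∀ n, P.map (X n) = volume.restrict (Icc 0 1))
    {a : ι → ℝ} (ha : Summable a) (φ : ι → ℝ) {δ : ℝ} (hδ : 0 < δ) {s : Finset ι}
    (hs : s.card = 3) (hδa : ∀ n ∈ s, δ ≤ |a n|) :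
    P.map (fun ω => ∑' n, a n * sin (φ n + 2 * π * X n ω)) ≤
      (ENNReal.ofReal δ⁻¹ * (∫⁻ y, arcsinePDF y ^ (3 / 2 : ℝ)) ^ 2) • volume := by
  set Y : ι → Ω → ℝ := fun n ω => a n * sin (φ n + 2 * π * X n ω)
  have hYm (n : ι) : Measurable (Y n) := by fun_prop
  have hY : iIndepFun Y P :=
    hX.comp (fun n x => a n * sin (φ n + 2 * π * x)) fun n => by fun_prop
  have hsum (ω : Ω) : Summable fun n => Y n ω :=
    ha.abs.of_norm_bounded fun n => by
      rw [norm_mul]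
      exact mul_le_of_le_one_right (norm_nonneg _) (abs_sin_le_one _)
  classical
  obtain ⟨i, j, k, hij, hik, hjk, rfl⟩ := Finset.card_eq_three.1 hs
  have hi := hδa i (by simp)
  have hj := hδa j (by simp)
  have hk := hδa k (by simp)
  have hlaw {n : ι} (hn : δ ≤ |a n|) :
      P.map (Y n) = volume.withDensity (scaleDensity arcsinePDF (a n)) :=
    map_mul_sin_eq_withDensity (hXm n) (hunif n) (abs_pos.1 (hδ.trans_le hn)) (φ n)
  have hmeas (n : ι) := measurable_scaleDensity measurable_arcsinePDF (a n)
  refine map_tsum_le_of_map_sum_le hY hYm hsum {i, j, k} ?_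
  calc P.map (fun ω => ∑ n ∈ {i, j, k}, Y n ω) = P.map (Y i + (Y j + Y k)) := by
        congr with ω
        simp [Finset.sum_insert, hij, hik, hjk]
    _ = volume.withDensity _ := map_add_add_eq_withDensity_lconvolution hY hYm hij hik hjk
        (hmeas i) (hmeas j) (hmeas k) (hlaw hi) (hlaw hj) (hlaw hk)
    _ ≤ _ := (withDensity_mono (ae_of_all _ fun x =>
        lconvolution_lconvolution_scaleDensity_le measurable_arcsinePDF hδ hi hj hk x)).trans_eq
          (withDensity_const _)

end Series

section Amplitudes
open Real Set

lemma summable_rpow_mul_sin {b β : ℝ} (hb : 1 < b) (hβ : 0 < β) (u : ℕ → ℝ) :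
    Summable fun n : ℕ => 2 * b ^ (-β * n) * sin (u n) := by
  have hb0 : 0 < b := zero_lt_one.trans hb
  have hgeom : Summable fun n : ℕ => 2 * (b ^ (-β)) ^ n :=
    (summable_geometric_of_lt_one (by positivity)
      (rpow_lt_one_of_one_lt_of_neg hb (neg_lt_zero.2 hβ))).mul_left 2
  refine hgeom.of_norm_bounded fun n => ?_
  rw [norm_mul, norm_of_nonneg (by positivity), rpow_mul_natCast hb0.le]
  exact mul_le_of_le_one_right (by positivity) (abs_sin_le_one _)

lemma exists_finset_card_eq_pow_mem_Icc {b x : ℝ} (hb : 1 < b) {k : ℕ} (hx : b ^ k ≤ x) :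
    ∃ s : Finset ℕ, s.card = k + 1 ∧ ∀ n ∈ s, b ^ n ∈ Icc (x / b ^ (k + 1)) x := by
  obtain ⟨N, hN, hN'⟩ := exists_nat_pow_near ((one_le_pow₀ hb.le).trans hx) hb
  have hkN : k ≤ N := Nat.lt_succ_iff.1 ((pow_lt_pow_iff_right₀ hb).1 (hx.trans_lt hN'))
  obtain ⟨m, rfl⟩ := Nat.exists_eq_add_of_le' hkN
  refine ⟨Finset.Icc m (m + k), by rw [Nat.card_Icc]; omega, fun n hn => ?_⟩
  obtain ⟨hmn, hnm⟩ := Finset.mem_Icc.1 hn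
  refine ⟨?_, (pow_le_pow_right₀ hb.le hnm).trans hN⟩
  rw [div_le_iff₀ (by positivity), ← pow_add]
  exact hN'.le.trans (pow_le_pow_right₀ hb.le (by omega))

lemma mul_rpow_le_abs_mul_sin {b β t c : ℝ} (hb : 0 < b) (hβ : 0 ≤ β) (ht : t ≠ 0) {n : ℕ}
    (hn : b ^ n ∈ Icc (c / |t|) (1 / (2 * |t|))) :
    4 * c * |t| ^ β ≤ |2 * b ^ (-β * n) * sin (π * b ^ n * t)| := by
  have ht' : 0 < |t| := abs_pos.2 ht
  have hlow : c ≤ b ^ n * |t| := (div_le_iff₀ ht').1 hn.1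
  have hupp : b ^ n * |t| ≤ 1 / 2 := by
    have := (le_div_iff₀ (by positivity)).1 hn.2
    linarith
  have hsin : 2 * c ≤ |sin (π * b ^ n * t)| := by
    have habs : |π * b ^ n * t| = π * (b ^ n * |t|) := by
      rw [mul_assoc, abs_mul, abs_mul, abs_of_pos pi_pos, abs_of_pos (pow_pos hb n)]
    have := mul_abs_le_abs_sin (x := π * b ^ n * t) (by rw [habs]; nlinarith [pi_pos])
    rw [habs, ← mul_assoc, div_mul_cancel₀ _ pi_ne_zero] at this
    linarith
  have hpow : |t| ^ β ≤ b ^ (-β * n) := by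
    have : |t| ≤ (b ^ n)⁻¹ := by
      rw [le_inv_comm₀ ht' (by positivity), ← one_div, le_div_iff₀ ht']
      linarith
    calc |t| ^ β ≤ ((b ^ n)⁻¹) ^ β := rpow_le_rpow ht'.le this hβ
      _ = b ^ (-β * n) := by
        rw [inv_rpow (by positivity), ← rpow_neg (by positivity), ← rpow_natCast,
          ← rpow_mul hb.le, mul_comm]
  calc 4 * c * |t| ^ β = 2 * |t| ^ β * (2 * c) := by ring
    _ ≤ 2 * |t| ^ β * |sin (π * b ^ n * t)| := by gcongr
    _ ≤ 2 * b ^ (-β * n) * |sin (π * b ^ n * t)| := by gcongr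
    _ = _ := by rw [abs_mul, abs_of_pos (show 0 < 2 * b ^ (-β * n) by positivity)]

lemma exists_card_eq_three_le_abs_mul_sin {b β t : ℝ} (hb : 1 < b) (hβ : 0 ≤ β) (ht : t ≠ 0)
    (htb : |t| ≤ 1 / (2 * b ^ 2)) :
    ∃ s : Finset ℕ, s.card = 3 ∧
      ∀ n ∈ s, 2 * |t| ^ β / b ^ 3 ≤ |2 * b ^ (-β * n) * sin (π * b ^ n * t)| := by
  have hb0 : 0 < b := zero_lt_one.trans hb
  have ht' : 0 < |t| := abs_pos.2 ht
  have hx : b ^ 2 ≤ 1 / (2 * |t|) := by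
    rw [le_div_iff₀ (by positivity)] at htb ⊢
    linarith
  obtain ⟨s, hs, hmem⟩ := exists_finset_card_eq_pow_mem_Icc hb hx
  refine ⟨s, hs, fun n hn => ?_⟩
  convert mul_rpow_le_abs_mul_sin (c := 1 / (2 * b ^ 3)) hb0 hβ ht (n := n) ?_ using 1
  · field_simp
    norm_num
  · convert hmem n hn using 2
    field_simp

end Amplitudes

section UniformProduct
open ProbabilityTheory Set

instance isProbabilityMeasure_restrict_Icc_zero_one :
    IsProbabilityMeasure (volume.restrict (Icc (0 : ℝ) 1)) :=
  ⟨by simp⟩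

variable {μ : Measure (ℕ → ℝ)}

lemma IsUniformProductMeasure.eq_infinitePi (hμ : IsUniformProductMeasure μ) :
    μ = Measure.infinitePi fun _ => volume.restrict (Icc (0 : ℝ) 1) :=
  Measure.eq_infinitePi _ fun s t ht => hμ s t ht

lemma IsUniformProductMeasure.iIndepFun_eval (hμ : IsUniformProductMeasure μ) :
    iIndepFun (fun (n : ℕ) (Θ : ℕ → ℝ) => Θ n) μ := by
  rw [hμ.eq_infinitePi]
  exact iIndepFun_infinitePi (X := fun _ x => x) fun _ => measurable_id

lemma IsUniformProductMeasure.map_eval (hμ : IsUniformProductMeasure μ) (n : ℕ) :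
    μ.map (fun Θ => Θ n) = volume.restrict (Icc (0 : ℝ) 1) := by
  rw [hμ.eq_infinitePi]
  exact Measure.infinitePi_map_eval _ n

end UniformProduct

theorem stmt_11_general (b β : ℝ) (hb : 1 < b) (hβ : 0 < β)
    (μ : Measure (ℕ → ℝ)) (hμ : IsUniformProductMeasure μ) :
    ∃ C₃ > (0 : ℝ), ∀ x y : ℝ, 0 < |x - y| → |x - y| ≤ 1 / (2 * b ^ 2) →
      ∃ h : ℝ → ℝ, (∀ t, 0 ≤ h t) ∧
        Measure.map (fun Θ : ℕ → ℝ =>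
            ∑' n : ℕ, 2 * b ^ (-β * (n : ℝ)) *
              Real.sin (Real.pi * b ^ n * (x + y) + 2 * Real.pi * Θ n) *
              Real.sin (Real.pi * b ^ n * (y - x))) μ =
          volume.withDensity (fun t => ENNReal.ofReal (h t)) ∧
        ∀ t, h t ≤ C₃ * |x - y| ^ (-β) := by
  have : 0 < b := zero_lt_one.trans hb
  set I : ℝ≥0∞ := ∫⁻ y, arcsinePDF y ^ (3 / 2 : ℝ) with hI
  have hI_fin : I ≠ ⊤ := (lintegral_arcsinePDF_rpow_lt_top (by norm_num) (by norm_num)).ne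
  refine ⟨b ^ 3 * I.toReal ^ 2 + 1, by positivity, fun x y hpos hle => ?_⟩
  rw [abs_sub_comm] at hpos hle ⊢
  set d : ℝ := |y - x|
  obtain ⟨s, hs, hδ⟩ := exists_card_eq_three_le_abs_mul_sin hb hβ.le (abs_pos.1 hpos) hle
  have hlaw := map_tsum_mul_sin_le hμ.iIndepFun_eval measurable_pi_apply hμ.map_eval
    (summable_rpow_mul_sin hb hβ fun n => Real.pi * b ^ n * (y - x))
    (fun n => Real.pi * b ^ n * (x + y)) (by positivity) hs hδ
  rw [← hI, ← ENNReal.ofReal_toReal (ENNReal.pow_ne_top hI_fin), ← ENNReal.ofReal_mul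
    (by positivity), ENNReal.toReal_pow] at hlaw
  have := hμ.iIndepFun_eval.isProbabilityMeasure
  obtain ⟨h, h_nonneg, h_density, h_le⟩ := exists_density_le (by positivity) hlaw
  refine ⟨h, h_nonneg, ?_, fun t => (h_le t).trans ?_⟩
  · rw [← h_density]
    congr! 4
    ring
  · rw [inv_div, Real.rpow_neg hpos.le, ← div_eq_mul_inv, div_mul_eq_mul_div,
      div_le_div_iff₀ (by positivity) (by positivity)]
    have : 0 ≤ b ^ 3 * I.toReal ^ 2 * d ^ β := by positivity
    have : 0 < d ^ β := by positivity
    linarith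

/-- there is `C₃ > 0` (depending only on `b`, `β`) such that for all
`x, y ∈ [0,1]` with `0 < |x-y| ≤ 1/(2b²)`, the random variable
`X₁(Θ) = ∑ 2 b^{-βn} sin(π bⁿ(x+y) + 2πθₙ) sin(π bⁿ(y-x))` has a probability density
function `h` with `h(t) ≤ C₃ |x-y|^{-β}` for all `t`. -/
theorem stmt_11 (b β : ℝ) (hb : 1 < b) (hβ : β ∈ Set.Ioo (0 : ℝ) (1 / 2))
    (μ : Measure (ℕ → ℝ)) (hμ : IsUniformProductMeasure μ) :
    ∃ C₃ > (0 : ℝ), ∀ x ∈ Set.Icc (0 : ℝ) 1, ∀ y ∈ Set.Icc (0 : ℝ) 1,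
      0 < |x - y| → |x - y| ≤ 1 / (2 * b ^ 2) →
      ∃ h : ℝ → ℝ, (∀ t, 0 ≤ h t) ∧
        Measure.map (fun Θ : ℕ → ℝ =>
            ∑' n : ℕ, 2 * b ^ (-β * (n : ℝ)) *
              Real.sin (Real.pi * b ^ n * (x + y) + 2 * Real.pi * Θ n) *
              Real.sin (Real.pi * b ^ n * (y - x))) μ =
          volume.withDensity (fun t => ENNReal.ofReal (h t)) ∧
        ∀ t, h t ≤ C₃ * |x - y| ^ (-β) := by
  obtain ⟨C₃, hC₃, h⟩ := stmt_11_general b β hb hβ.1 μ hμ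
  exact ⟨C₃, hC₃, fun x _ y _ => h x y⟩
end
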